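/- Let 0 < r < 1 and θ = r + 3/4 (dimension d = 2). There exists a constant C, depending only on r and independent of T, such that the following holds. Let w₀ be a Schwartz function on ℝ², let T > 0, let f : [0,T] × ℝ² → ℂ be continuous with f(t,·) Schwartz for each t and t ↦ [f(t,·)]_θ integrable, and define w(t, ·) = e^{itD} w₀ + ∫₀^t e^{i(t−s)D} f(s, ·) ds (so that ∂_t w = i D w + f, w(0) = w₀). Then (∫₀^T {w(t, ·)}_r⁴ dt)^{1/4} ≤ C · ([w₀]_θ + ∫₀^T [f(t, ·)]_θ dt). -/

import Mathlib

open MeasureTheory ENNReal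
open scoped RealInnerProductSpace

noncomputable section

/-- Shorthand for Euclidean space `ℝ^d`. -/
abbrev Ed (d : ℕ) := EuclideanSpace ℝ (Fin d)

/-- The homogeneous Besov (Gagliardo) seminorm `[f]_{r,p}`. -/
def gagliardo (d : ℕ) (r p : ℝ) {F : Type*} [NormedAddCommGroup F] (f : Ed d → F) : ℝ≥0∞ :=
  (∫⁻ x, ∫⁻ y, (‖f x - f y‖₊ : ℝ≥0∞) ^ p / (‖x - y‖₊ : ℝ≥0∞) ^ (r * p + d)) ^ (1 / p)

/-- The homogeneous Hölder seminorm `{f}_r`. -/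
def holderSemi (d : ℕ) (r : ℝ) {F : Type*} [NormedAddCommGroup F] (f : Ed d → F) : ℝ≥0∞ :=
  ⨆ x, ⨆ y, (‖f x - f y‖₊ : ℝ≥0∞) / (‖x - y‖₊ : ℝ≥0∞) ^ r

/-- The Fourier transform `f̂(κ) = ∫ e^{-i x·κ} f(x) dx`. -/
def ftransform (d : ℕ) (f : Ed d → ℂ) (κ : Ed d) : ℂ :=
  ∫ x, Complex.exp (-(Complex.I * (⟪x, κ⟫ : ℂ))) * f x

/-- The homogeneous Sobolev seminorm `[f]_θ = ((2π)^{-d} ∫ |κ|^{2θ} |f̂(κ)|² dκ)^{1/2}`. -/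
def sobolevSemi (d : ℕ) (θ : ℝ) (f : Ed d → ℂ) : ℝ≥0∞ :=
  (ENNReal.ofReal ((2 * Real.pi) ^ (-(d : ℝ))) *
    ∫⁻ κ, (‖κ‖₊ : ℝ≥0∞) ^ (2 * θ) * (‖ftransform d f κ‖₊ : ℝ≥0∞) ^ (2 : ℕ)) ^ ((1 : ℝ) / 2)

/-- A symbol of class `S⁰_{ph}`: smooth away from the origin and positively
homogeneous of degree `0`. -/
def IsSymbol0 (d : ℕ) (a : Ed d → ℂ) : Prop :=
  ContDiffOn ℝ (⊤ : ℕ∞) a {0}ᶜ ∧ ∀ (c : ℝ) (κ : Ed d), 0 < c → κ ≠ 0 → a (c • κ) = a κ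

/-- The operator `𝔞[f](x) = (2π)^{-d} ∫ e^{i x·κ} a(κ) f̂(κ) dκ` associated with a symbol. -/
def symbOp (d : ℕ) (a : Ed d → ℂ) (f : Ed d → ℂ) (x : Ed d) : ℂ :=
  (((2 * Real.pi) ^ (-(d : ℝ)) : ℝ) : ℂ) *
    ∫ κ, Complex.exp (Complex.I * (⟪x, κ⟫ : ℂ)) * a κ * ftransform d f κ

/-- The partial derivative `∂_i f(x)`. -/
def pd (d : ℕ) (i : Fin d) (f : Ed d → ℝ) (x : Ed d) : ℝ :=
  fderiv ℝ f x (EuclideanSpace.single i 1)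

/-- The half-wave propagator `(e^{itD} g)(x) = (2π)^{-d} ∫ e^{i x·κ} e^{i t|κ|} ĝ(κ) dκ`. -/
def halfWave (d : ℕ) (t : ℝ) (g : Ed d → ℂ) (x : Ed d) : ℂ :=
  (((2 * Real.pi) ^ (-(d : ℝ)) : ℝ) : ℂ) *
    ∫ κ, Complex.exp (Complex.I * ((⟪x, κ⟫ : ℂ) + (t : ℂ) * ((‖κ‖ : ℝ) : ℂ))) *
      ftransform d g κ

end


lemma gaussFT (ε : ℝ) (hε : 0 < ε) (c : ℝ) :
    ∫ ρ : ℝ, ((Real.exp (-(ε^2*ρ^2)) : ℝ) : ℂ) * Complex.exp (Complex.I * (ρ * c))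
      = ((Real.sqrt Real.pi / ε * Real.exp (-(c^2/(4*ε^2))) : ℝ) : ℂ) := by
  have h := fourierIntegral_gaussian (b := ((ε^2 : ℝ) : ℂ)) (by
    rw [Complex.ofReal_re]; positivity) (c : ℂ)
  have e1 : ∀ ρ : ℝ, ((Real.exp (-(ε^2*ρ^2)) : ℝ) : ℂ) * Complex.exp (Complex.I * (ρ * c))
      = Complex.exp (Complex.I * c * ρ) * Complex.exp (-((ε^2 : ℝ) : ℂ) * ρ ^ 2) := by
    intro ρ
    rw [mul_comm]
    push_cast
    congr 2 <;> ring
  simp_rw [e1]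
  rw [h]
  push_cast
  congr 1
  · rw [show ((Real.pi : ℂ) / (ε:ℂ)^2) = ((Real.pi / ε^2 : ℝ) : ℂ) by push_cast; rfl,
      show (1/2 : ℂ) = ((1/2 : ℝ) : ℂ) by push_cast; rfl,
      ← Complex.ofReal_cpow (by positivity), ← Real.sqrt_eq_rpow, Real.sqrt_div Real.pi_pos.le,
      Real.sqrt_sq hε.le]
    push_cast; rfl
  · congr 1; ring

lemma L1 {Ω : Type*} [MeasurableSpace Ω] (μ : Measure Ω) [SFinite μ] (β : Ω → ℂ)
    (hβ : Integrable β μ) (τ : Ω → ℝ) (hτ : Measurable τ) (ε : ℝ) (hε : 0 < ε) :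
    ∫⁻ ρ : ℝ, ENNReal.ofReal (Real.exp (-(ε^2*ρ^2))) *
        ‖∫ ω, β ω * Complex.exp (Complex.I * (ρ * τ ω)) ∂μ‖ₑ^2
      ≤ ∫⁻ p : Ω × Ω, ‖β p.1‖ₑ * ‖β p.2‖ₑ *
        ENNReal.ofReal (Real.sqrt Real.pi / ε * Real.exp (-((τ p.1 - τ p.2)^2/(4*ε^2))))
          ∂(μ.prod μ) := by
  have hgi : Integrable (fun ρ : ℝ => Real.exp (-(ε^2*ρ^2))) := by
    simpa using integrable_exp_neg_mul_sq (b := ε^2) (by positivity)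
  have hm1 : AEStronglyMeasurable (fun q : ℝ × Ω => β q.2 * Complex.exp (Complex.I * (q.1 * τ q.2)))
      (volume.prod μ) := by
    apply AEStronglyMeasurable.mul
    · exact hβ.aestronglyMeasurable.comp_snd
    · apply Measurable.aestronglyMeasurable; fun_prop
  set F : ℝ → ℂ := fun ρ => ∫ ω, β ω * Complex.exp (Complex.I * (ρ * τ ω)) ∂μ with hF
  have hFm : AEStronglyMeasurable F volume := hm1.integral_prod_right'
  have hnexp : ∀ a b : ℝ, ‖Complex.exp (Complex.I * (a * b))‖ = 1 := by
    intro a b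
    rw [mul_comm, ← Complex.ofReal_mul, Complex.norm_exp_ofReal_mul_I]
  have hFb : ∀ ρ, ‖F ρ‖ ≤ ∫ ω, ‖β ω‖ ∂μ := by
    intro ρ
    refine (norm_integral_le_integral_norm _).trans (le_of_eq ?_)
    congr 1; ext ω; rw [norm_mul, hnexp, mul_one]
  set M := ∫ ω, ‖β ω‖ ∂μ
  have hintg : Integrable (fun ρ => Real.exp (-(ε^2*ρ^2)) * ‖F ρ‖^2) := by
    apply hgi.mul_bdd (c := M^2) (hFm.norm.pow 2)
    filter_upwards with ρ
    rw [Pi.pow_apply, norm_pow, norm_norm]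
    gcongr; exact hFb ρ
  have e0 : ∫⁻ ρ : ℝ, ENNReal.ofReal (Real.exp (-(ε^2*ρ^2))) * ‖F ρ‖ₑ^2
      = ENNReal.ofReal (∫ ρ, Real.exp (-(ε^2*ρ^2)) * ‖F ρ‖^2) := by
    rw [ofReal_integral_eq_lintegral_ofReal hintg (by filter_upwards with ρ; positivity)]
    congr 1; ext ρ
    rw [ENNReal.ofReal_mul (by positivity), ENNReal.ofReal_pow (by positivity), ofReal_norm]
  have e1 : ((∫ ρ, Real.exp (-(ε^2*ρ^2)) * ‖F ρ‖^2 : ℝ) : ℂ)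
      = ∫ ρ : ℝ, ∫ p : Ω × Ω, ((Real.exp (-(ε^2*ρ^2)) : ℝ) : ℂ) * ((β p.1 * (starRingEnd ℂ) (β p.2)) *
          Complex.exp (Complex.I * (ρ * (τ p.1 - τ p.2 : ℝ)))) ∂(μ.prod μ) := by
    rw [← integral_complex_ofReal]
    congr 1; ext ρ
    rw [integral_const_mul]
    push_cast
    congr 1
    rw [← Complex.mul_conj']
    rw [hF]; dsimp only
    rw [← integral_conj, ← integral_prod_mul]
    congr 1; ext p
    rw [map_mul, ← Complex.exp_conj]
    simp only [map_mul, Complex.conj_I, Complex.conj_ofReal]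
    rw [show Complex.I * (↑ρ * ((τ p.1:ℂ) - (τ p.2:ℂ))) = Complex.I * (ρ * τ p.1) + -Complex.I * (ρ * τ p.2) by ring,
      Complex.exp_add]
    ring
  have hββ : Integrable (fun p : Ω × Ω => β p.1 * (starRingEnd ℂ) (β p.2)) (μ.prod μ) :=
    hβ.mul_prod ((Complex.conjCLE : ℂ →L[ℝ] ℂ).integrable_comp hβ)
  have hI : Integrable (Function.uncurry fun (ρ : ℝ) (p : Ω × Ω) =>
      ((Real.exp (-(ε^2*ρ^2)) : ℝ) : ℂ) * ((β p.1 * (starRingEnd ℂ) (β p.2)) *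
          Complex.exp (Complex.I * (ρ * (τ p.1 - τ p.2 : ℝ))))) (volume.prod (μ.prod μ)) := by
    have h := (hgi.ofReal (𝕜 := ℂ)).mul_prod hββ
    have h2 := h.mul_bdd (c := 1) (g := fun q : ℝ × Ω × Ω => Complex.exp (Complex.I * (q.1 * (τ q.2.1 - τ q.2.2 : ℝ))))
      (by apply Measurable.aestronglyMeasurable; fun_prop)
      (by filter_upwards with q; rw [hnexp])
    refine h2.congr ?_
    filter_upwards with q
    simp only [Function.uncurry]
    rw [mul_assoc]; rfl
  rw [integral_integral_swap hI] at e1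
  have e2 : ∀ p : Ω × Ω, ∫ ρ : ℝ, ((Real.exp (-(ε^2*ρ^2)) : ℝ) : ℂ) * ((β p.1 * (starRingEnd ℂ) (β p.2)) *
          Complex.exp (Complex.I * (ρ * (τ p.1 - τ p.2 : ℝ)))) =
      (β p.1 * (starRingEnd ℂ) (β p.2)) * ((Real.sqrt Real.pi / ε * Real.exp (-((τ p.1 - τ p.2)^2/(4*ε^2))) : ℝ) : ℂ) := by
    intro p
    rw [← gaussFT ε hε, ← integral_const_mul]
    congr 1; ext ρ; ring
  simp_rw [e2] at e1
  rw [e0]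
  have e3 : ENNReal.ofReal (∫ ρ, Real.exp (-(ε^2*ρ^2)) * ‖F ρ‖^2) =
     ‖((∫ ρ, Real.exp (-(ε^2*ρ^2)) * ‖F ρ‖^2 : ℝ) : ℂ)‖ₑ := by
    rw [← ofReal_norm, Complex.norm_real, Real.norm_of_nonneg]
    apply integral_nonneg; intro ρ; positivity
  rw [e3, e1]
  refine (enorm_integral_le_lintegral_enorm _).trans (le_of_eq ?_)
  congr 1; ext p
  rw [enorm_mul, enorm_mul]
  congr 1
  · congr 1
    rw [← ofReal_norm, RCLike.norm_conj, ofReal_norm]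
  · rw [← ofReal_norm, Complex.norm_real, Real.norm_of_nonneg]
    positivity


lemma int_lorentz (k : ℝ) (hk : 0 < k) :
    Integrable (fun u : ℝ => 1/(1+(k*u)^2)) ∧ ∫ u : ℝ, 1/(1+(k*u)^2) = Real.pi / k := by
  have h1 := integrable_inv_one_add_sq
  constructor
  · simpa using h1.comp_mul_left' hk.ne'
  · have := Measure.integral_comp_mul_left (fun u : ℝ => (1+u^2)⁻¹) k
    simp only [integral_univ_inv_one_add_sq] at this
    simp only [one_div]
    rw [this, abs_of_pos (by positivity), smul_eq_mul]
    field_simp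

lemma ang_aux (A : ℝ) (hA : 0 < A) (c : ℝ) :
    ∫ φ in (-Real.pi)..Real.pi, 1/(1+2*A*(Real.sin ((φ - c)/2))^2) ≤ Real.pi^2 / Real.sqrt (2*A) := by
  set h : ℝ → ℝ := fun u => 1/(1+2*A*(Real.sin (u/2))^2) with hh
  have hpos : ∀ u : ℝ, 0 < 1+2*A*(Real.sin (u/2))^2 := fun u => by positivity
  have hcont : Continuous h := by
    apply Continuous.div (by fun_prop) (by fun_prop)
    intro u; exact (hpos u).ne'
  have hper : Function.Periodic h (2*Real.pi) := by
    intro u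
    simp only [hh]
    rw [show (u + 2*Real.pi)/2 = u/2 + Real.pi by ring, Real.sin_add_pi, neg_sq]
  have e1 : ∫ φ in (-Real.pi)..Real.pi, h (φ - c) = ∫ φ in (-Real.pi)..Real.pi, h φ := by
    rw [intervalIntegral.integral_comp_sub_right h c]
    have := hper.intervalIntegral_add_eq (-Real.pi - c) (-Real.pi)
    rw [show -Real.pi - c + 2*Real.pi = Real.pi - c by ring, show -Real.pi + 2*Real.pi = Real.pi by ring] at this
    exact this
  change ∫ φ in (-Real.pi)..Real.pi, h (φ - c) ≤ _
  rw [e1]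
  set k := Real.sqrt (2*A)/Real.pi with hk
  have hkpos : 0 < k := by have := Real.pi_pos; positivity
  obtain ⟨i1, i2⟩ := int_lorentz k hkpos
  have hp := Real.pi_pos
  calc ∫ φ in (-Real.pi)..Real.pi, h φ ≤ ∫ φ in (-Real.pi)..Real.pi, 1/(1+(k*φ)^2) := by
        apply intervalIntegral.integral_mono_on (by linarith) (hcont.intervalIntegrable _ _) i1.intervalIntegrable
        intro u hu
        simp only [hh]
        apply one_div_le_one_div_of_le (by positivity)
        have h2 : 2/Real.pi * |u/2| ≤ |Real.sin (u/2)| := by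
          apply Real.mul_abs_le_abs_sin
          rw [abs_le]; constructor <;> linarith [hu.1, hu.2]
        have h3 : (2/Real.pi * |u/2|)^2 ≤ |Real.sin (u/2)|^2 := by gcongr
        rw [sq_abs, mul_pow, sq_abs] at h3
        have : (k*u)^2 = 2*A*((2/Real.pi)^2 * (u/2)^2) := by
          rw [hk, mul_pow, div_pow, Real.sq_sqrt (by positivity)]; field_simp
        rw [this]; gcongr
    _ ≤ ∫ φ, 1/(1+(k*φ)^2) := by
        rw [intervalIntegral.integral_of_le (by linarith)]
        apply setIntegral_le_integral i1
        filter_upwards with u; positivity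
    _ = Real.pi^2 / Real.sqrt (2*A) := by
        rw [i2, hk]; field_simp

lemma cos_clamp (c φ : ℝ) : |Real.cos φ - Real.cos (Real.arccos c)| ≤ |Real.cos φ - c| := by
  rcases le_total c (-1) with h | h
  · rw [Real.arccos_of_le_neg_one h, Real.cos_pi]
    have := Real.neg_one_le_cos φ
    rw [abs_of_nonneg (by linarith), abs_of_nonneg (by linarith)]; linarith
  rcases le_total c 1 with h' | h'
  · rw [Real.cos_arccos h h']
  · rw [Real.arccos_of_one_le h', Real.cos_zero]
    have := Real.cos_le_one φ
    rw [abs_of_nonpos (by linarith), abs_of_nonpos (by linarith)]; linarith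

lemma ang_pt (A : ℝ) (hA : 0 < A) (c φ : ℝ) :
    1/(1+A*|Real.cos φ - c|) ≤ 1/(1+2*A*(Real.sin ((φ - Real.arccos c)/2))^2) +
      1/(1+2*A*(Real.sin ((φ - -Real.arccos c)/2))^2) := by
  have h1 : 1/(1+A*|Real.cos φ - c|) ≤ 1/(1+A*|Real.cos φ - Real.cos (Real.arccos c)|) := by
    apply one_div_le_one_div_of_le (by positivity)
    have := mul_le_mul_of_nonneg_left (cos_clamp c φ) hA.le
    linarith
  refine h1.trans ?_
  set α := Real.arccos c
  rw [Real.cos_sub_cos, abs_mul, abs_mul, sub_neg_eq_add, abs_neg, abs_two]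
  set a := Real.sin ((φ + α)/2)
  set b := Real.sin ((φ - α)/2)
  rcases le_total |a| |b| with h | h
  · have : 1/(1+A*(2 * |a| * |b|)) ≤ 1/(1+2*A*a^2) := by
      apply one_div_le_one_div_of_le (by positivity)
      rw [← sq_abs a]
      nlinarith [mul_le_mul_of_nonneg_left h (abs_nonneg a)]
    have : 0 ≤ 1/(1+2*A*b^2) := by positivity
    linarith
  · have : 1/(1+A*(2 * |a| * |b|)) ≤ 1/(1+2*A*b^2) := by
      apply one_div_le_one_div_of_le (by positivity)
      rw [← sq_abs b]
      nlinarith [mul_le_mul_of_nonneg_left h (abs_nonneg b)]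
    have : 0 ≤ 1/(1+2*A*a^2) := by positivity
    linarith

lemma L2real (ε T p q : ℝ) (hε : 0 < ε) (hT : T ≠ 0) :
    ∫ φ in (-Real.pi)..Real.pi, 1/(1+|T + p * Real.cos φ + q * Real.sin φ|/ε)
      ≤ 2 * Real.pi^2 * Real.sqrt (ε/|T|) := by
  have hT' : 0 < |T| := abs_pos.2 hT
  have hp := Real.pi_pos
  have hcontL : Continuous (fun φ : ℝ => 1/(1+|T + p * Real.cos φ + q * Real.sin φ|/ε)) := by
    apply Continuous.div (by fun_prop) (by fun_prop)
    intro u; positivity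
  set z : ℂ := ⟨p, q⟩
  set R := ‖z‖ with hR
  set φ₀ := z.arg
  have hpR : p = R * Real.cos φ₀ := (Complex.norm_mul_cos_arg z).symm
  have hqR : q = R * Real.sin φ₀ := (Complex.norm_mul_sin_arg z).symm
  have hpq : ∀ φ, T + p * Real.cos φ + q * Real.sin φ = T + R * Real.cos (φ - φ₀) := by
    intro φ
    conv_lhs => rw [hpR, hqR]
    rw [Real.cos_sub]; ring
  simp_rw [hpq] at hcontL ⊢
  have hs : 0 < Real.sqrt (ε/|T|) := by positivity
  have hR0 : 0 ≤ R := norm_nonneg z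
  rcases le_or_gt R (|T|/2) with hRT | hRT
  · have hb : ∀ φ, 1/(1+|T + R * Real.cos (φ - φ₀)|/ε) ≤ Real.sqrt (ε/|T|) := by
      intro φ
      have h1 : |T|/2 ≤ |T + R * Real.cos (φ - φ₀)| := by
        have h2 : |R * Real.cos (φ - φ₀)| ≤ |T|/2 := by
          rw [abs_mul, abs_of_nonneg hR0]
          nlinarith [Real.abs_cos_le_one (φ - φ₀), abs_nonneg (Real.cos (φ - φ₀))]
        have h3 := abs_sub_abs_le_abs_sub T (-(R * Real.cos (φ - φ₀)))
        rw [abs_neg, sub_neg_eq_add] at h3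
        linarith
      set s := Real.sqrt (ε/|T|)
      have hs2 : s^2 = ε/|T| := Real.sq_sqrt (by positivity)
      have h4 : |T|/2/ε = 1/(2*s^2) := by rw [hs2]; field_simp
      have h5 : 1 + 1/(2*s^2) ≤ 1+|T + R * Real.cos (φ - φ₀)|/ε := by
        rw [← h4]; gcongr
      calc 1/(1+|T + R * Real.cos (φ - φ₀)|/ε) ≤ 1/(1 + 1/(2*s^2)) :=
            one_div_le_one_div_of_le (by positivity) h5
        _ ≤ s := by
          rw [div_le_iff₀ (by positivity)]
          have : s * (1 + 1/(2*s^2)) - 1 = (s^2 + (s-1)^2)/(2*s) := by field_simp; ring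
          have h6 : 0 ≤ (s^2 + (s-1)^2)/(2*s) := by positivity
          linarith
    calc _ ≤ ∫ φ in (-Real.pi)..Real.pi, Real.sqrt (ε/|T|) := by
          apply intervalIntegral.integral_mono_on (by linarith) (hcontL.intervalIntegrable _ _) (by simp)
          intro φ _; exact hb φ
      _ = 2*Real.pi*Real.sqrt (ε/|T|) := by simp; ring
      _ ≤ 2 * Real.pi^2 * Real.sqrt (ε/|T|) := by
          gcongr
          nlinarith [Real.pi_gt_three]
  · have hRp : 0 < R := by linarith
    set A := R/ε with hA
    have hAp : 0 < A := by positivity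
    set c := -T/R with hc
    have hc1 : ∀ α : ℝ, Continuous (fun φ : ℝ => 1/(1+2*A*(Real.sin ((φ - α)/2))^2)) := by
      intro α
      apply Continuous.div (by fun_prop) (by fun_prop)
      intro u; positivity
    have hb : ∀ φ, 1/(1+|T + R * Real.cos (φ - φ₀)|/ε) ≤
        1/(1+2*A*(Real.sin ((φ - (φ₀ + Real.arccos c))/2))^2) +
      1/(1+2*A*(Real.sin ((φ - (φ₀ - Real.arccos c))/2))^2) := by
      intro φ
      have h := ang_pt A hAp c (φ - φ₀)
      have e : A*|Real.cos (φ - φ₀) - c| = |T + R * Real.cos (φ - φ₀)|/ε := by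
        have : T + R * Real.cos (φ - φ₀) = R * (Real.cos (φ - φ₀) - c) := by
          rw [hc]; field_simp; ring
        rw [this, abs_mul, abs_of_pos hRp, hA]; ring
      rw [e] at h
      convert h using 6
      all_goals ring_nf
    calc _ ≤ ∫ φ in (-Real.pi)..Real.pi, (1/(1+2*A*(Real.sin ((φ - (φ₀ + Real.arccos c))/2))^2) +
      1/(1+2*A*(Real.sin ((φ - (φ₀ - Real.arccos c))/2))^2)) := by
          apply intervalIntegral.integral_mono_on (by linarith) (hcontL.intervalIntegrable _ _)
            (((hc1 _).add (hc1 _)).intervalIntegrable _ _)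
          intro φ _; exact hb φ
      _ ≤ Real.pi^2 / Real.sqrt (2*A) + Real.pi^2 / Real.sqrt (2*A) := by
          rw [intervalIntegral.integral_add ((hc1 _).intervalIntegrable _ _) ((hc1 _).intervalIntegrable _ _)]
          exact add_le_add (ang_aux A hAp _) (ang_aux A hAp _)
      _ = 2 * Real.pi^2 * Real.sqrt (1/(2*A)) := by
          rw [Real.sqrt_div (by positivity), Real.sqrt_one]; ring
      _ ≤ _ := by
          refine mul_le_mul_of_nonneg_left (Real.sqrt_le_sqrt ?_) (by positivity)
          rw [hA, div_le_div_iff₀ (by positivity) hT']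
          field_simp
          linarith

lemma L2 (ε T p q : ℝ) (hε : 0 < ε) (hT : T ≠ 0) :
    ∫⁻ φ in Set.Ioo (-Real.pi) Real.pi, ENNReal.ofReal (1/(1+|T + p * Real.cos φ + q * Real.sin φ|/ε))
      ≤ ENNReal.ofReal (2 * Real.pi^2 * Real.sqrt (ε/|T|)) := by
  have hcontL : Continuous (fun φ : ℝ => 1/(1+|T + p * Real.cos φ + q * Real.sin φ|/ε)) := by
    apply Continuous.div (by fun_prop) (by fun_prop)
    intro u; positivity
  have hp := Real.pi_pos
  rw [setLIntegral_congr Ioo_ae_eq_Ioc, ← ofReal_integral_eq_lintegral_ofReal,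
    ← intervalIntegral.integral_of_le (by linarith)]
  · exact ENNReal.ofReal_le_ofReal (L2real ε T p q hε hT)
  · exact (hcontL.integrableOn_Icc).mono_set Set.Ioc_subset_Icc_self
  · filter_upwards with φ; positivity


lemma polarEd (f : Ed 2 → ℝ≥0∞) : ∫⁻ κ, f κ =
    ∫⁻ p in Set.Ioi (0:ℝ) ×ˢ Set.Ioo (-Real.pi) Real.pi,
      ENNReal.ofReal p.1 * f (!₂[p.1 * Real.cos p.2, p.1 * Real.sin p.2]) := by
  have h := Complex.lintegral_comp_polarCoord_symm (fun c => f (Complex.orthonormalBasisOneI.repr c))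
  rw [(LinearIsometryEquiv.measurePreserving Complex.orthonormalBasisOneI.repr).lintegral_comp_emb
    (Complex.orthonormalBasisOneI.repr.toHomeomorph.measurableEmbedding)] at h
  rw [← h]
  have : polarCoord.target = Set.Ioi (0 : ℝ) ×ˢ Set.Ioo (-Real.pi) Real.pi := rfl
  rw [this]
  congr 1

lemma exp_lor (c ε : ℝ) (hε : 0 < ε) :
    Real.exp (-(c^2/(4*ε^2))) ≤ 2 * (1/(1+|c|/ε)) := by
  set y := |c|/ε with hy
  have hy0 : 0 ≤ y := by positivity
  have e : c^2/(4*ε^2) = y^2/4 := by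
    rw [hy, div_pow, sq_abs]; field_simp
  rw [e, Real.exp_neg, mul_one_div, inv_eq_one_div, div_le_div_iff₀ (Real.exp_pos _) (by positivity)]
  have := Real.add_one_le_exp (y^2/4)
  nlinarith [sq_nonneg (y-1)]

lemma ang_enn (ε T p q : ℝ) (hε : 0 < ε) :
    ∫⁻ φ in Set.Ioo (-Real.pi) Real.pi, ENNReal.ofReal (1/(1+|T + p * Real.cos φ + q * Real.sin φ|/ε))
      ≤ ENNReal.ofReal (2 * Real.pi^2 * Real.sqrt ε) * ‖T‖ₑ ^ (-(1/2) : ℝ) := by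
  rcases eq_or_ne T 0 with rfl | hT
  · have : 0 < 2 * Real.pi^2 * Real.sqrt ε := by have := Real.pi_pos; positivity
    rw [enorm_zero, ENNReal.zero_rpow_of_neg (by norm_num), ENNReal.mul_top (by simpa using this)]
    exact le_top
  · refine (L2 ε T p q hε hT).trans (le_of_eq ?_)
    have hT' : 0 < |T| := abs_pos.2 hT
    rw [← ofReal_norm, Real.norm_eq_abs, ENNReal.ofReal_rpow_of_pos hT', ← ENNReal.ofReal_mul (by positivity)]
    congr 1
    rw [Real.sqrt_div hε.le, Real.rpow_neg hT'.le, ← Real.sqrt_eq_rpow]; ring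

set_option maxHeartbeats 1000000 in
lemma L3 {Ω : Type*} [MeasurableSpace Ω] (μ : Measure Ω) [SFinite μ] (β : Ω → ℂ)
    (hβ : Integrable β μ) (hβm : Measurable β) (t : Ω → ℝ) (ht : Measurable t)
    (z : Ω → Ed 2) (hz : Measurable z) (ε : ℝ) (hε : 0 < ε) :
    ∫⁻ κ : Ed 2, ENNReal.ofReal (Real.exp (-(2*ε^2*‖κ‖^2))) *
        ‖∫ ω, β ω * Complex.exp (Complex.I * ((⟪z ω, κ⟫ : ℂ) + (t ω : ℂ) * ((‖κ‖ : ℝ) : ℂ))) ∂μ‖ₑ^2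
      ≤ ENNReal.ofReal (4 * Real.pi^2 * Real.sqrt Real.pi * (Real.sqrt ε / ε^2)) *
        ∫⁻ p : Ω × Ω, ‖β p.1‖ₑ * ‖β p.2‖ₑ * ‖t p.1 - t p.2‖ₑ ^ (-(1/2) : ℝ) ∂(μ.prod μ) := by
  have hp := Real.pi_pos
  have hz0 : Measurable (fun ω => z ω 0) := by fun_prop
  have hz1 : Measurable (fun ω => z ω 1) := by fun_prop
  set τ : ℝ → Ω → ℝ := fun φ ω => t ω + z ω 0 * Real.cos φ + z ω 1 * Real.sin φ with hτ
  have hτm : ∀ φ, Measurable (τ φ) := fun φ => by fun_prop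
  set F : ℝ × ℝ → ℂ := fun p => ∫ ω, β ω * Complex.exp (Complex.I * (p.1 * τ p.2 ω)) ∂μ with hF
  have hFm : Measurable F := by
    apply StronglyMeasurable.measurable
    apply StronglyMeasurable.integral_prod_right (f := fun (p : ℝ × ℝ) ω => β ω * Complex.exp (Complex.I * (p.1 * τ p.2 ω)))
    apply Measurable.stronglyMeasurable
    simp only [hτ, Function.uncurry_def]
    fun_prop
  rw [polarEd]
  calc _ = ∫⁻ p in Set.Ioi (0:ℝ) ×ˢ Set.Ioo (-Real.pi) Real.pi,
        ENNReal.ofReal p.1 * (ENNReal.ofReal (Real.exp (-(2*ε^2*p.1^2))) * ‖F p‖ₑ^2) := by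
        apply setLIntegral_congr_fun (measurableSet_Ioi.prod measurableSet_Ioo)
        rintro ⟨ρ, φ⟩ ⟨hρ, -⟩
        have hρ' : 0 < ρ := hρ
        have hn : ‖(!₂[ρ * Real.cos φ, ρ * Real.sin φ] : Ed 2)‖ = ρ := by
          rw [EuclideanSpace.norm_eq]
          simp only [Fin.sum_univ_two, Real.norm_eq_abs, sq_abs]
          simp only [Matrix.cons_val_zero, Matrix.cons_val_one]
          rw [show (ρ * Real.cos φ)^2 + (ρ * Real.sin φ)^2 = ρ^2 by
            rw [mul_pow, mul_pow, ← mul_add, Real.cos_sq_add_sin_sq, mul_one], Real.sqrt_sq hρ'.le]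
        simp only [hn, hF]
        congr 6
        ext ω
        congr 3
        simp only [hτ, PiLp.inner_apply, Fin.sum_univ_two]
        simp
        ring
    _ ≤ ∫⁻ p in Set.Ioi (0:ℝ) ×ˢ Set.Ioo (-Real.pi) Real.pi,
        ENNReal.ofReal (1/ε) * (ENNReal.ofReal (Real.exp (-(ε^2*p.1^2))) * ‖F p‖ₑ^2) := by
        apply setLIntegral_mono' (measurableSet_Ioi.prod measurableSet_Ioo)
        rintro ⟨ρ, φ⟩ ⟨hρ, -⟩
        have hρ' : 0 < ρ := hρ
        rw [← mul_assoc, ← mul_assoc]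
        gcongr ?_ * _
        rw [← ENNReal.ofReal_mul hρ'.le, ← ENNReal.ofReal_mul (by positivity)]
        apply ENNReal.ofReal_le_ofReal
        simp only
        rw [show -(2*ε^2*ρ^2) = -(ε^2*ρ^2) + -(ε^2*ρ^2) by ring, Real.exp_add, ← mul_assoc]
        gcongr ?_ * _
        rw [Real.exp_neg, ← div_eq_mul_inv, div_le_div_iff₀ (Real.exp_pos _) hε]
        have := Real.add_one_le_exp (ε^2*ρ^2)
        nlinarith [sq_nonneg (ρ*ε-1)]
    _ = ENNReal.ofReal (1/ε) * ∫⁻ φ in Set.Ioo (-Real.pi) Real.pi, ∫⁻ ρ in Set.Ioi (0:ℝ),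
         (ENNReal.ofReal (Real.exp (-(ε^2*ρ^2))) * ‖F (ρ, φ)‖ₑ^2) := by
        rw [lintegral_const_mul' _ _ ENNReal.ofReal_ne_top, Measure.volume_eq_prod, ← Measure.prod_restrict,
          lintegral_prod_symm]
        apply Measurable.aemeasurable
        fun_prop
    _ ≤ ENNReal.ofReal (1/ε) * ∫⁻ φ in Set.Ioo (-Real.pi) Real.pi,
        ∫⁻ p : Ω × Ω, ‖β p.1‖ₑ * ‖β p.2‖ₑ *
        ENNReal.ofReal (Real.sqrt Real.pi / ε * Real.exp (-((τ φ p.1 - τ φ p.2)^2/(4*ε^2))))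
          ∂(μ.prod μ) := by
        gcongr with φ
        refine (setLIntegral_le_lintegral _ _).trans ?_
        exact L1 μ β hβ (τ φ) (hτm φ) ε hε
    _ ≤ ENNReal.ofReal (1/ε) * ∫⁻ φ in Set.Ioo (-Real.pi) Real.pi,
        ∫⁻ p : Ω × Ω, ENNReal.ofReal (Real.sqrt Real.pi / ε * 2) * (‖β p.1‖ₑ * ‖β p.2‖ₑ *
        ENNReal.ofReal (1/(1+|(t p.1 - t p.2) + (z p.1 0 - z p.2 0) * Real.cos φ + (z p.1 1 - z p.2 1) * Real.sin φ|/ε)))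
          ∂(μ.prod μ) := by
        refine mul_le_mul_right (lintegral_mono fun φ => lintegral_mono fun p => ?_) _
        simp only
        rw [mul_left_comm]
        gcongr _ * ?_
        rw [← ENNReal.ofReal_mul (by positivity), mul_assoc]
        gcongr
        refine (exp_lor _ _ hε).trans (le_of_eq ?_)
        simp only [hτ]
        congr 5
        ring
    _ = ENNReal.ofReal (1/ε) * (ENNReal.ofReal (Real.sqrt Real.pi / ε * 2) * ∫⁻ p : Ω × Ω, ‖β p.1‖ₑ * ‖β p.2‖ₑ * (∫⁻ φ in Set.Ioo (-Real.pi) Real.pi,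
        ENNReal.ofReal (1/(1+|(t p.1 - t p.2) + (z p.1 0 - z p.2 0) * Real.cos φ + (z p.1 1 - z p.2 1) * Real.sin φ|/ε)))
          ∂(μ.prod μ)) := by
        congr 1
        rw [lintegral_lintegral_swap (by apply Measurable.aemeasurable; simp only [Function.uncurry_def]; fun_prop)]
        rw [← lintegral_const_mul' _ _ ENNReal.ofReal_ne_top]
        congr 1; ext p
        rw [lintegral_const_mul' _ _ ENNReal.ofReal_ne_top]
        congr 1
        rw [lintegral_const_mul' _ _ (by finiteness)]
    _ ≤ ENNReal.ofReal (1/ε) * (ENNReal.ofReal (Real.sqrt Real.pi / ε * 2) * ∫⁻ p : Ω × Ω, ‖β p.1‖ₑ * ‖β p.2‖ₑ *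
          (ENNReal.ofReal (2 * Real.pi^2 * Real.sqrt ε) * ‖t p.1 - t p.2‖ₑ ^ (-(1/2) : ℝ)) ∂(μ.prod μ)) := by
        gcongr with p
        exact ang_enn _ _ _ _ hε
    _ = _ := by
        simp_rw [mul_left_comm _ (ENNReal.ofReal (2 * Real.pi^2 * Real.sqrt ε)) _]
        rw [lintegral_const_mul' _ _ ENNReal.ofReal_ne_top, ← mul_assoc, ← mul_assoc,
          ← ENNReal.ofReal_mul (by positivity), ← ENNReal.ofReal_mul (by positivity)]
        congr 2
        field_simp
        ring


lemma lint_rpow_Ioc (p δ : ℝ) (hp : -1 < p) (hδ : 0 < δ) :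
    ∫⁻ u in Set.Ioc 0 δ, ENNReal.ofReal (u^p) = ENNReal.ofReal (δ^(p+1)/(p+1)) := by
  rw [← ofReal_integral_eq_lintegral_ofReal, ← intervalIntegral.integral_of_le hδ.le,
    integral_rpow (Or.inl hp), Real.zero_rpow (by linarith), sub_zero]
  · have := intervalIntegral.intervalIntegrable_rpow' (a := 0) (b := δ) hp
    rwa [intervalIntegrable_iff_integrableOn_Ioc_of_le hδ.le] at this
  · filter_upwards [ae_restrict_mem measurableSet_Ioc] with u hu
    exact Real.rpow_nonneg hu.1.le _

lemma lint_rpow_Ioi (p δ : ℝ) (hp : p < -1) (hδ : 0 < δ) :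
    ∫⁻ u in Set.Ioi δ, ENNReal.ofReal (u^p) = ENNReal.ofReal (δ^(p+1)/(-(p+1))) := by
  rw [← ofReal_integral_eq_lintegral_ofReal, integral_Ioi_rpow_of_lt hp hδ]
  · congr 1; rw [div_neg, neg_div]
  · exact integrableOn_Ioi_rpow_of_lt hp hδ
  · filter_upwards [ae_restrict_mem measurableSet_Ioi] with u hu
    exact Real.rpow_nonneg (hδ.trans hu).le _

lemma lint_even (f : ℝ → ℝ≥0∞) : ∫⁻ u, f |u| = 2 * ∫⁻ u in Set.Ioi 0, f u := by
  rw [← lintegral_add_compl (fun u => f |u|) (measurableSet_Ioi (a := (0:ℝ)))]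
  have h1 : ∫⁻ u in Set.Ioi (0:ℝ), f |u| = ∫⁻ u in Set.Ioi 0, f u := by
    apply setLIntegral_congr_fun measurableSet_Ioi
    intro u hu; simp only [abs_of_pos (show (0:ℝ) < u from hu)]
  have h2 : ∫⁻ u in (Set.Ioi (0:ℝ))ᶜ, f |u| = ∫⁻ u in Set.Ioi (0:ℝ), f |u| := by
    rw [Set.compl_Ioi, ← setLIntegral_congr Iio_ae_eq_Iic]
    have := (Measure.measurePreserving_neg (volume : Measure ℝ)).setLIntegral_comp_preimage_emb
      (MeasurableEquiv.neg ℝ).measurableEmbedding (fun u => f |u|) (Set.Ioi 0)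
    simp only [abs_neg] at this
    rw [← this]
    congr 2; ext u; simp
  rw [h2, h1, two_mul]

lemma near_int (δ : ℝ) (hδ : 0 < δ) (t : ℝ) :
    ∫⁻ s, (if |t - s| ≤ δ then ‖t - s‖ₑ ^ (-(1/2):ℝ) else 0) ≤ ENNReal.ofReal (4 * δ^(1/2:ℝ)) := by
  rw [lintegral_sub_left_eq_self (fun u => if |u| ≤ δ then ‖u‖ₑ ^ (-(1/2):ℝ) else 0) t]
  have e : ∀ u : ℝ, (if |u| ≤ δ then ‖u‖ₑ ^ (-(1/2):ℝ) else 0) =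
      (fun v : ℝ => if v ≤ δ then (ENNReal.ofReal v) ^ (-(1/2):ℝ) else 0) |u| := by
    intro u; simp only; rw [← ofReal_norm, Real.norm_eq_abs]
  simp_rw [e]
  rw [lint_even (fun v : ℝ => if v ≤ δ then (ENNReal.ofReal v) ^ (-(1/2):ℝ) else 0)]
  have : ∫⁻ u in Set.Ioi (0:ℝ), (if u ≤ δ then (ENNReal.ofReal u) ^ (-(1/2):ℝ) else 0)
      = ∫⁻ u in Set.Ioc 0 δ, ENNReal.ofReal (u^(-(1/2):ℝ)) := by
    rw [← lintegral_indicator measurableSet_Ioi, ← lintegral_indicator measurableSet_Ioc]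
    congr 1; ext u
    simp only [Set.indicator, Set.mem_Ioi, Set.mem_Ioc]
    by_cases h0 : 0 < u
    · by_cases h1 : u ≤ δ
      · simp only [h0, h1, and_self, if_true]
        rw [ENNReal.ofReal_rpow_of_pos h0]
      · simp [h0, h1]
    · simp [h0]
  rw [this, lint_rpow_Ioc _ _ (by norm_num) hδ, show (2:ℝ≥0∞) = ENNReal.ofReal 2 by simp,
    ← ENNReal.ofReal_mul (by norm_num)]
  apply ENNReal.ofReal_le_ofReal
  norm_num
  linarith

lemma far_int (δ : ℝ) (hδ : 0 < δ) (t : ℝ) :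
    ∫⁻ s, (if |t - s| ≤ δ then 0 else ‖t - s‖ₑ ^ (-(1/2):ℝ)) ^ (4:ℝ) ≤ ENNReal.ofReal (2 * δ^(-1:ℝ)) := by
  rw [lintegral_sub_left_eq_self (fun u => (if |u| ≤ δ then 0 else ‖u‖ₑ ^ (-(1/2):ℝ))^(4:ℝ)) t]
  have e : ∀ u : ℝ, (if |u| ≤ δ then 0 else ‖u‖ₑ ^ (-(1/2):ℝ))^(4:ℝ) =
      (fun v : ℝ => (if v ≤ δ then 0 else (ENNReal.ofReal v) ^ (-(1/2):ℝ))^(4:ℝ)) |u| := by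
    intro u; simp only; rw [← ofReal_norm, Real.norm_eq_abs]
  simp_rw [e]
  rw [lint_even (fun v : ℝ => (if v ≤ δ then 0 else (ENNReal.ofReal v) ^ (-(1/2):ℝ))^(4:ℝ))]
  have : ∫⁻ u in Set.Ioi (0:ℝ), (if u ≤ δ then 0 else (ENNReal.ofReal u) ^ (-(1/2):ℝ))^(4:ℝ)
      = ∫⁻ u in Set.Ioi δ, ENNReal.ofReal (u^(-2:ℝ)) := by
    rw [← lintegral_indicator measurableSet_Ioi, ← lintegral_indicator measurableSet_Ioi]
    congr 1; ext u
    simp only [Set.indicator, Set.mem_Ioi]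
    by_cases h0 : δ < u
    · have h1 : 0 < u := hδ.trans h0
      simp only [h0, h1, if_true, not_le.2 h0, if_false]
      rw [← ENNReal.rpow_mul, ENNReal.ofReal_rpow_of_pos h1]
      norm_num
    · simp [h0, not_lt.1 h0]
  rw [this, lint_rpow_Ioi _ _ (by norm_num) hδ, show (2:ℝ≥0∞) = ENNReal.ofReal 2 by simp,
    ← ENNReal.ofReal_mul (by norm_num)]
  apply ENNReal.ofReal_le_ofReal
  norm_num

lemma HLS_inner (a : ℝ → ℝ≥0∞) (ha : Measurable a) (b S : ℝ) (hb : 0 < b) (hS0 : 0 < S)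
    (hS : ∫⁻ s, a s ^ (4/3:ℝ) = ENNReal.ofReal S) (t : ℝ) :
    ∫⁻ s, (if a s ≤ ENNReal.ofReal b then a s * ‖t - s‖ₑ ^ (-(1/2):ℝ) else 0)
      ≤ 6 * (ENNReal.ofReal b) ^ (1/3:ℝ) * (ENNReal.ofReal S)^(1/2:ℝ) := by
  set δ := S * b^(-(4/3):ℝ) with hδ
  have hδ0 : 0 < δ := by positivity
  have h1 : ∀ s, (if a s ≤ ENNReal.ofReal b then a s * ‖t - s‖ₑ ^ (-(1/2):ℝ) else 0) ≤
      ENNReal.ofReal b * (if |t - s| ≤ δ then ‖t - s‖ₑ ^ (-(1/2):ℝ) else 0) +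
      a s * (if |t - s| ≤ δ then 0 else ‖t - s‖ₑ ^ (-(1/2):ℝ)) := by
    intro s
    by_cases h : a s ≤ ENNReal.ofReal b <;> by_cases h' : |t - s| ≤ δ <;> simp only [h, h', if_true, if_false]
    · simp only [mul_zero, add_zero]; gcongr
    · simp
    · simp
    · simp
  have hm : MeasurableSet {s : ℝ | |t - s| ≤ δ} := measurableSet_le (by fun_prop) (by fun_prop)
  have hm1 : Measurable (fun s => (if |t - s| ≤ δ then ‖t - s‖ₑ ^ (-(1/2):ℝ) else 0)) :=
    Measurable.ite hm (by fun_prop) (by fun_prop)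
  have hm2 : Measurable (fun s => (if |t - s| ≤ δ then 0 else ‖t - s‖ₑ ^ (-(1/2):ℝ))) :=
    Measurable.ite hm (by fun_prop) (by fun_prop)
  calc _ ≤ _ := lintegral_mono h1
    _ = (ENNReal.ofReal b * ∫⁻ s, (if |t - s| ≤ δ then ‖t - s‖ₑ ^ (-(1/2):ℝ) else 0)) +
        ∫⁻ s, a s * (if |t - s| ≤ δ then 0 else ‖t - s‖ₑ ^ (-(1/2):ℝ)) := by
        rw [lintegral_add_left (hm1.const_mul _), lintegral_const_mul _ hm1]
    _ ≤ ENNReal.ofReal b * ENNReal.ofReal (4 * δ^(1/2:ℝ)) +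
        (ENNReal.ofReal S)^(3/4:ℝ) * (ENNReal.ofReal (2 * δ^(-1:ℝ)))^(1/4:ℝ) := by
        gcongr
        · exact near_int δ hδ0 t
        · have hh := ENNReal.lintegral_mul_le_Lp_mul_Lq volume (p := 4/3) (q := 4)
            (by constructor <;> norm_num) ha.aemeasurable hm2.aemeasurable
          refine hh.trans ?_
          rw [hS]
          norm_num
          gcongr
          have := far_int δ hδ0 t
          norm_num at this
          exact this
    _ ≤ _ := by
        rw [ENNReal.ofReal_rpow_of_pos hS0, ENNReal.ofReal_rpow_of_pos hS0, ENNReal.ofReal_rpow_of_pos hb,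
          ENNReal.ofReal_rpow_of_pos (by positivity), show (6:ℝ≥0∞) = ENNReal.ofReal 6 by simp,
          ← ENNReal.ofReal_mul hb.le, ← ENNReal.ofReal_mul (by positivity), ← ENNReal.ofReal_mul (by positivity),
          ← ENNReal.ofReal_mul (by positivity), ← ENNReal.ofReal_add (by positivity) (by positivity)]
        apply ENNReal.ofReal_le_ofReal
        have e1 : b * (4 * δ^(1/2:ℝ)) = 4 * (b^(1/3:ℝ) * S^(1/2:ℝ)) := by
          rw [hδ, Real.mul_rpow hS0.le (by positivity), ← Real.rpow_mul hb.le]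
          have : b^(1/3:ℝ) = b * b ^ (-(4/3) * (1/2) : ℝ) := by
            rw [← Real.rpow_one_add' hb.le (by norm_num)]; norm_num
          rw [this]; ring
        have e2 : S^(3/4:ℝ) * (2 * δ^(-1:ℝ))^(1/4:ℝ) = 2^(1/4:ℝ) * (b^(1/3:ℝ) * S^(1/2:ℝ)) := by
          rw [Real.mul_rpow (by norm_num) (by positivity), ← Real.rpow_mul hδ0.le, hδ,
            Real.mul_rpow hS0.le (by positivity), ← Real.rpow_mul hb.le]
          have : S^(1/2:ℝ) = S^(3/4:ℝ) * S^(-1 * (1/4):ℝ) := by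
            rw [← Real.rpow_add hS0]; norm_num
          rw [this, show (-(4/3) * (-1 * (1/4)) : ℝ) = 1/3 by norm_num]; ring
        have e3 : (2:ℝ)^(1/4:ℝ) ≤ 2 := by
          conv_rhs => rw [← Real.rpow_one 2]
          apply Real.rpow_le_rpow_of_exponent_le <;> norm_num
        rw [e1, e2]
        have : 0 ≤ b^(1/3:ℝ) * S^(1/2:ℝ) := by positivity
        nlinarith

lemma HLS (a : ℝ → ℝ≥0∞) (ha : Measurable a) (hfin : ∀ t, a t ≠ ⊤) :
    ∫⁻ p : ℝ × ℝ, a p.1 * a p.2 * ‖p.1 - p.2‖ₑ ^ (-(1/2) : ℝ)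
      ≤ 12 * (∫⁻ t, a t ^ (4/3:ℝ)) ^ (3/2:ℝ) := by
  rcases eq_or_ne (∫⁻ t, a t ^ (4/3:ℝ)) ⊤ with h | hS
  · rw [h]; simp
  rcases eq_or_ne (∫⁻ t, a t ^ (4/3:ℝ)) 0 with h0 | hS0
  · rw [lintegral_eq_zero_iff (by fun_prop)] at h0
    rw [Measure.volume_eq_prod, lintegral_prod _ (by apply Measurable.aemeasurable; fun_prop)]
    have : ∀ᵐ t, ∫⁻ s, a t * a s * ‖t - s‖ₑ ^ (-(1/2) : ℝ) = 0 := by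
      filter_upwards [h0] with t ht
      have : a t = 0 := by
        rcases (ENNReal.rpow_eq_zero_iff.1 (show a t ^ (4/3:ℝ) = 0 from ht)) with h | h
        · exact h.1
        · exact absurd h.1 (hfin t)
      simp [this]
    rw [lintegral_congr_ae this]; simp
  set S := (∫⁻ t, a t ^ (4/3:ℝ)).toReal with hSd
  have hSpos : 0 < S := ENNReal.toReal_pos hS0 hS
  have hSe : ∫⁻ t, a t ^ (4/3:ℝ) = ENNReal.ofReal S := (ENNReal.ofReal_toReal hS).symm
  set H : ℝ × ℝ → ℝ≥0∞ := fun p => if a p.2 ≤ a p.1 then a p.1 * a p.2 * ‖p.1 - p.2‖ₑ ^ (-(1/2) : ℝ) else 0 with hH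
  have hHm : Measurable H := by
    apply Measurable.ite (measurableSet_le (by fun_prop) (by fun_prop)) (by fun_prop) (by fun_prop)
  have h1 : ∀ p : ℝ × ℝ, a p.1 * a p.2 * ‖p.1 - p.2‖ₑ ^ (-(1/2) : ℝ) ≤ H p + H p.swap := by
    intro p
    simp only [hH, Prod.fst_swap, Prod.snd_swap]
    rcases le_total (a p.1) (a p.2) with h | h
    · simp only [h, if_true]
      rw [mul_comm (a p.1), ← neg_sub p.2 p.1, enorm_neg]
      exact le_add_self
    · simp only [h, if_true]
      exact le_self_add
  have h2 : ∫⁻ p : ℝ × ℝ, H p.swap = ∫⁻ p, H p := by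
    rw [Measure.volume_eq_prod]
    exact lintegral_prod_swap H
  have h3 : ∫⁻ p, H p ≤ 6 * (ENNReal.ofReal S)^(3/2:ℝ) := by
    rw [Measure.volume_eq_prod, lintegral_prod _ hHm.aemeasurable]
    calc ∫⁻ t, ∫⁻ s, H (t, s) ≤ ∫⁻ t, (6 * (ENNReal.ofReal S)^(1/2:ℝ)) * a t ^ (4/3:ℝ) := by
          gcongr with t
          rcases eq_or_ne (a t) 0 with h0 | h0
          · simp [hH, h0]
          have hb : 0 < (a t).toReal := ENNReal.toReal_pos h0 (hfin t)
          have hbe : a t = ENNReal.ofReal (a t).toReal := (ENNReal.ofReal_toReal (hfin t)).symm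
          have := HLS_inner a ha (a t).toReal S hb hSpos hSe t
          rw [← hbe] at this
          calc ∫⁻ s, H (t, s) = ∫⁻ s, a t * (if a s ≤ a t then a s * ‖t - s‖ₑ ^ (-(1/2):ℝ) else 0) := by
                congr 1; ext s
                simp only [hH, mul_ite, mul_zero, mul_assoc]
            _ = a t * ∫⁻ s, (if a s ≤ a t then a s * ‖t - s‖ₑ ^ (-(1/2):ℝ) else 0) :=
                lintegral_const_mul' _ _ (hfin t)
            _ ≤ a t * (6 * (a t) ^ (1/3:ℝ) * (ENNReal.ofReal S)^(1/2:ℝ)) := by gcongr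
            _ = _ := by
                rw [show (4/3:ℝ) = 1 + 1/3 by norm_num, ENNReal.rpow_add _ _ h0 (hfin t), ENNReal.rpow_one]
                ring
      _ = 6 * (ENNReal.ofReal S)^(3/2:ℝ) := by
          rw [lintegral_const_mul _ (by fun_prop), hSe, mul_assoc, show (3/2:ℝ) = 1/2 + 1 by norm_num,
            ENNReal.rpow_add _ _ (by simpa using hSpos) (by simp), ENNReal.rpow_one]
  calc _ ≤ ∫⁻ p : ℝ × ℝ, (H p + H p.swap) := lintegral_mono h1
    _ = (∫⁻ p, H p) + ∫⁻ p, H p := by rw [lintegral_add_left hHm, h2]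
    _ ≤ 6 * (ENNReal.ofReal S)^(3/2:ℝ) + 6 * (ENNReal.ofReal S)^(3/2:ℝ) := by gcongr
    _ = _ := by rw [hSe, ← add_mul]; norm_num


/-- plane wave -/
noncomputable def Ew (z : Ed 2) (t : ℝ) (κ : Ed 2) : ℂ :=
  Complex.exp (Complex.I * ((⟪z, κ⟫ : ℂ) + (t : ℂ) * ((‖κ‖ : ℝ) : ℂ)))

lemma Ew_norm (z t κ) : ‖Ew z t κ‖ = 1 := by
  have : Ew z t κ = Complex.exp (((⟪z, κ⟫ + t * ‖κ‖ : ℝ) : ℂ) * Complex.I) := by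
    unfold Ew; congr 1; push_cast; ring
  rw [this, Complex.norm_exp_ofReal_mul_I]

lemma Ew_cont : Continuous (fun p : Ed 2 × ℝ × Ed 2 => Ew p.1 p.2.1 p.2.2) := by
  unfold Ew; fun_prop

lemma Ew_meas {α : Type*} [MeasurableSpace α] {z : α → Ed 2} {t : α → ℝ} {κ : α → Ed 2}
    (hz : Measurable z) (ht : Measurable t) (hκ : Measurable κ) :
    Measurable (fun a => Ew (z a) (t a) (κ a)) := by
  unfold Ew
  have h1 : Measurable (fun a => ⟪z a, κ a⟫) := hz.inner hκ
  fun_prop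

/-- L3 constant -/
noncomputable def K3 (ε : ℝ) : ℝ≥0∞ := ENNReal.ofReal (4*Real.pi^2*√Real.pi*(√ε/ε^2))

/-- double integral -/
noncomputable def II (a : ℝ → ℝ≥0∞) : ℝ≥0∞ :=
  ∫⁻ p : ℝ × ℝ, a p.1 * a p.2 * ‖p.1 - p.2‖ₑ ^ (-(1/2) : ℝ)

lemma II_mono {a b : ℝ → ℝ≥0∞} (h : ∀ t, a t ≤ b t) : II a ≤ II b := by
  unfold II
  refine lintegral_mono fun p => ?_
  gcongr <;> exact h _

lemma sq_add_le (a b : ℝ≥0∞) : (a + b)^2 ≤ 2 * (a^2 + b^2) := by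
  have := ENNReal.rpow_add_le_mul_rpow_add_rpow a b (p := 2) (by norm_num)
  norm_num at this
  simpa using this

lemma enorm_sub_sq (a b : ℂ) : ‖a - b‖ₑ^2 ≤ 2 * (‖a‖ₑ^2 + ‖b‖ₑ^2) :=
  (pow_le_pow_left' (enorm_sub_le) 2).trans (sq_add_le _ _)

lemma enorm_add_sq (a b : ℂ) : ‖a + b‖ₑ^2 ≤ 2 * (‖a‖ₑ^2 + ‖b‖ₑ^2) :=
  (pow_le_pow_left' (enorm_add_le _ _) 2).trans (sq_add_le _ _)

lemma Ew_int {Ω : Type*} [MeasurableSpace Ω] {μ : Measure Ω} {g : Ω → ℂ} (hg : Integrable g μ)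
    {z : Ω → Ed 2} (hz : Measurable z) {t : Ω → ℝ} (ht : Measurable t) (κ : Ed 2) :
    Integrable (fun ω => g ω * Ew (z ω) (t ω) κ) μ :=
  hg.mul_bdd (c := 1) (Ew_meas hz ht measurable_const).aestronglyMeasurable
    (by simp [Ew_norm])

lemma L3' (g : ℝ → ℂ) (hg : Integrable g) (hgm : Measurable g) (z : ℝ → Ed 2)
    (hz : Measurable z) (ε : ℝ) (hε : 0 < ε) :
    ∫⁻ κ : Ed 2, ENNReal.ofReal (Real.exp (-(2*ε^2*‖κ‖^2))) * ‖∫ t, g t * Ew (z t) t κ‖ₑ^2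
      ≤ K3 ε * II (fun t => ‖g t‖ₑ) :=
  L3 volume g hg hgm (fun t => t) measurable_id z hz ε hε

lemma meas_Phi {Ω : Type*} [MeasurableSpace Ω] {μ : Measure Ω} [SFinite μ] {g : Ω → ℂ}
    (hgm : Measurable g)
    {z : Ω → Ed 2} (hz : Measurable z) {t : Ω → ℝ} (ht : Measurable t) :
    Measurable (fun κ => ∫ ω, g ω * Ew (z ω) (t ω) κ ∂μ) := by
  have : Measurable (fun p : Ed 2 × Ω => g p.2 * Ew (z p.2) (t p.2) p.1) :=
    (hgm.comp measurable_snd).mul (Ew_meas (hz.comp measurable_snd) (ht.comp measurable_snd)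
      measurable_fst)
  exact (this.stronglyMeasurable.integral_prod_right (ν := μ)).measurable

lemma far_part (g : ℝ → ℂ) (hg : Integrable g) (hgm : Measurable g) (x y : ℝ → Ed 2)
    (hx : Measurable x) (hy : Measurable y) (ε : ℝ) (hε : 0 < ε) :
    ∫⁻ κ : Ed 2, ENNReal.ofReal (Real.exp (-(2*ε^2*‖κ‖^2))) *
      ‖∫ t, g t * (Ew (x t) t κ - Ew (y t) t κ)‖ₑ^2 ≤ 4 * (K3 ε * II (fun t => ‖g t‖ₑ)) := by
  have hm : ∀ z : ℝ → Ed 2, Measurable z → Measurable (fun κ : Ed 2 =>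
      ENNReal.ofReal (Real.exp (-(2*ε^2*‖κ‖^2))) * ‖∫ t, g t * Ew (z t) t κ‖ₑ^2) := by
    intro z hz
    have := meas_Phi (μ := volume) hgm hz measurable_id
    simp only [id] at this
    fun_prop
  calc _ ≤ ∫⁻ κ : Ed 2, (2 * (ENNReal.ofReal (Real.exp (-(2*ε^2*‖κ‖^2))) *
            ‖∫ t, g t * Ew (x t) t κ‖ₑ^2) + 2 * (ENNReal.ofReal (Real.exp (-(2*ε^2*‖κ‖^2))) *
            ‖∫ t, g t * Ew (y t) t κ‖ₑ^2)) := by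
        refine lintegral_mono fun κ => ?_
        have : ∫ t, g t * (Ew (x t) t κ - Ew (y t) t κ) =
          (∫ t, g t * Ew (x t) t κ) - ∫ t, g t * Ew (y t) t κ := by
          rw [← integral_sub (Ew_int (t := fun t => t) hg hx measurable_id κ)
            (Ew_int (t := fun t => t) hg hy measurable_id κ)]
          simp [mul_sub]
        simp only [this]
        calc _ ≤ ENNReal.ofReal (Real.exp (-(2*ε^2*‖κ‖^2))) * (2 * _) := by
                gcongr; exact enorm_sub_sq _ _
          _ = _ := by ring
    _ ≤ 2 * (K3 ε * II (fun t => ‖g t‖ₑ)) + 2 * (K3 ε * II (fun t => ‖g t‖ₑ)) := by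
        rw [lintegral_add_left ((hm x hx).const_mul 2), lintegral_const_mul _ (hm x hx),
          lintegral_const_mul _ (hm y hy)]
        gcongr
        · exact L3' g hg hgm x hx ε hε
        · exact L3' g hg hgm y hy ε hε
    _ = _ := by ring


lemma Ew_diff (x y : Ed 2) (t : ℝ) (κ : Ed 2) :
    Ew x t κ - Ew y t κ = ∫ u in Set.Icc (0:ℝ) 1,
      Complex.I * (⟪x - y, κ⟫ : ℂ) * Ew (y + u • (x - y)) t κ := by
  rw [integral_Icc_eq_integral_Ioc, ← intervalIntegral.integral_of_le zero_le_one]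
  have hd : ∀ u : ℝ, HasDerivAt (fun u : ℝ => Ew (y + u • (x - y)) t κ)
      (Complex.I * (⟪x - y, κ⟫ : ℂ) * Ew (y + u • (x - y)) t κ) u := by
    intro u
    unfold Ew
    have h1 : HasDerivAt (fun u : ℝ => (u : ℂ)) 1 u := Complex.ofRealCLM.hasDerivAt
    have h2 : HasDerivAt (fun u : ℝ => Complex.I * ((⟪y + u • (x - y), κ⟫ : ℂ) + (t : ℂ) * ((‖κ‖ : ℝ) : ℂ)))
        (Complex.I * (⟪x - y, κ⟫ : ℂ)) u := by
      have h3 : (fun u : ℝ => Complex.I * ((⟪y + u • (x - y), κ⟫ : ℂ) + (t : ℂ) * ((‖κ‖ : ℝ) : ℂ))) =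
        fun u : ℝ => Complex.I * (⟪x - y, κ⟫ : ℂ) * (u:ℂ) + Complex.I * ((⟪y, κ⟫ : ℂ) + (t : ℂ) * ((‖κ‖ : ℝ) : ℂ)) := by
        funext u
        rw [inner_add_left, real_inner_smul_left]
        push_cast; ring
      rw [h3]
      simpa using (h1.const_mul (Complex.I * (⟪x - y, κ⟫ : ℂ))).add_const
        (Complex.I * ((⟪y, κ⟫ : ℂ) + (t : ℂ) * ((‖κ‖ : ℝ) : ℂ)))
    exact h2.cexp.congr_deriv (mul_comm _ _)
  rw [intervalIntegral.integral_eq_sub_of_hasDerivAt (fun u _ => hd u)]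
  · simp
  · apply Continuous.intervalIntegrable
    unfold Ew; fun_prop

lemma near_gauss (ε : ℝ) (hε : 0 < ε) (k : ℝ) :
    k^2 * Real.exp (-(2*ε^2*k^2)) ≤ (1/ε^2) * Real.exp (-(2*(ε/√2)^2*k^2)) := by
  have h1 : (ε/√2)^2 = ε^2/2 := by rw [div_pow, Real.sq_sqrt (by norm_num)]
  rw [h1]
  have h2 : Real.exp (-(2*ε^2*k^2)) = Real.exp (-(ε^2*k^2)) * Real.exp (-(ε^2*k^2)) := by
    rw [← Real.exp_add]; ring_nf
  have h3 : ε^2*k^2 * Real.exp (-(ε^2*k^2)) ≤ 1 := by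
    have := Real.add_one_le_exp (ε^2*k^2)
    rw [Real.exp_neg, mul_inv_le_iff₀ (Real.exp_pos _)]; linarith
  have h4 : -(2*(ε^2/2)*k^2) = -(ε^2*k^2) := by ring
  rw [h2, h4]
  have := Real.exp_pos (-(ε^2*k^2))
  calc _ = (1/ε^2) * ((ε^2*k^2 * Real.exp (-(ε^2*k^2))) * Real.exp (-(ε^2*k^2))) := by
        field_simp
    _ ≤ (1/ε^2) * (1 * Real.exp (-(ε^2*k^2))) := by gcongr
    _ = _ := by ring

lemma K3_half (ε : ℝ) (hε : 0 < ε) : K3 (ε/√2) ≤ 2 * K3 ε := by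
  unfold K3
  have : (2:ℝ≥0∞) = ENNReal.ofReal 2 := by simp
  rw [this, ← ENNReal.ofReal_mul (by norm_num)]
  apply ENNReal.ofReal_le_ofReal
  have h1 : (ε/√2)^2 = ε^2/2 := by rw [div_pow, Real.sq_sqrt (by norm_num)]
  have h2 : √(ε/√2) ≤ √ε := by
    apply Real.sqrt_le_sqrt
    apply div_le_self hε.le
    rw [Real.one_le_sqrt]; norm_num
  rw [h1]
  calc _ ≤ 4*Real.pi^2*√Real.pi*(√ε/(ε^2/2)) := by gcongr
    _ = _ := by field_simp

lemma near_part (g : ℝ → ℂ) (hgm : Measurable g) (x y : ℝ → Ed 2)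
    (hx : Measurable x) (hy : Measurable y)
    (hgd : Integrable (fun t => g t * ((‖x t - y t‖ : ℝ) : ℂ))) (ε : ℝ) (hε : 0 < ε) :
    ∫⁻ κ : Ed 2, ENNReal.ofReal (Real.exp (-(2*ε^2*‖κ‖^2))) *
      ‖∫ t, g t * (Ew (x t) t κ - Ew (y t) t κ)‖ₑ^2 ≤
      8 * (ENNReal.ofReal (1/ε^2) * (K3 ε * II (fun t => ‖g t‖ₑ * ‖x t - y t‖ₑ))) := by
  set ν : Measure ℝ := volume.restrict (Set.Icc (0:ℝ) 1) with hν
  have : IsProbabilityMeasure ν := ⟨by simp [hν]⟩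
  set μ : Measure (ℝ × ℝ) := (volume : Measure ℝ).prod ν with hμ
  set z : ℝ × ℝ → Ed 2 := fun ω => y ω.1 + ω.2 • (x ω.1 - y ω.1) with hz
  have hzm : Measurable z := by fun_prop
  set b : Fin 2 → ℝ → ℂ := fun j t => g t * (((x t - y t) j : ℝ) : ℂ) with hb
  have hbm : ∀ j, Measurable (b j) := by
    intro j
    have : Measurable (fun t => (x t - y t) j) := by fun_prop
    fun_prop
  have hcoord : ∀ (v : Ed 2) j, ‖v j‖ ≤ ‖v‖ := fun v j => PiLp.norm_apply_le v j
  have hbi : ∀ j, Integrable (b j) := by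
    intro j
    refine hgd.mono (hbm j).aestronglyMeasurable (Filter.Eventually.of_forall fun t => ?_)
    simp only [hb, norm_mul, Complex.norm_real, norm_norm]
    gcongr
    exact hcoord _ _
  set Ψ : Fin 2 → Ed 2 → ℂ := fun j κ => ∫ ω, b j ω.1 * Ew (z ω) ω.1 κ ∂μ with hΨ
  have hβi : ∀ j, Integrable (fun ω : ℝ × ℝ => b j ω.1) μ := fun j => (hbi j).comp_fst ν
  have hβm : ∀ j, Measurable (fun ω : ℝ × ℝ => b j ω.1) := fun j => (hbm j).comp measurable_fst
  have hΨm : ∀ j, Measurable (Ψ j) := fun j => meas_Phi (hβm j) hzm measurable_fst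
  have hI := fun j κ => Ew_int (hβi j) hzm measurable_fst κ
  have hrep : ∀ κ : Ed 2, ∫ t, g t * (Ew (x t) t κ - Ew (y t) t κ) =
      Complex.I * (κ 0 : ℂ) * Ψ 0 κ + Complex.I * (κ 1 : ℂ) * Ψ 1 κ := by
    intro κ
    simp only [hΨ]
    have hA := ((hI 0 κ).const_mul (Complex.I * (κ 0 : ℂ)))
    have hB := ((hI 1 κ).const_mul (Complex.I * (κ 1 : ℂ)))
    rw [← integral_const_mul, ← integral_const_mul, ← integral_add hA hB]
    have hp := integral_prod _ (hA.add hB)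
    simp only [Pi.add_apply] at hp
    refine Eq.trans ?_ hp.symm
    congr 1; funext t
    rw [Ew_diff, ← integral_const_mul]
    congr 1; funext u
    simp only [hb, hz, PiLp.inner_apply, Fin.sum_univ_two]
    simp
    ring
  have hL3 : ∀ j, ∫⁻ κ : Ed 2, ENNReal.ofReal (Real.exp (-(2*(ε/√2)^2*‖κ‖^2))) * ‖Ψ j κ‖ₑ^2 ≤
      2 * K3 ε * II (fun t => ‖g t‖ₑ * ‖x t - y t‖ₑ) := by
    intro j
    refine (L3 μ (fun ω => b j ω.1) (hβi j) (hβm j) (fun ω => ω.1) measurable_fst z hzm (ε/√2)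
      (by positivity)).trans ?_
    refine mul_le_mul' (K3_half ε hε) ?_
    have hmp : MeasurePreserving (Prod.map Prod.fst Prod.fst : (ℝ × ℝ) × (ℝ × ℝ) → ℝ × ℝ)
        (μ.prod μ) (volume.prod volume) :=
      (measurePreserving_fst (μ := (volume : Measure ℝ)) (ν := ν)).prod measurePreserving_fst
    have hm : Measurable (fun p : ℝ × ℝ => ‖b j p.1‖ₑ * ‖b j p.2‖ₑ * ‖p.1 - p.2‖ₑ ^ (-(1/2) : ℝ)) := by
      have := hbm j
      fun_prop
    have := hmp.lintegral_comp hm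
    simp only [Prod.map] at this
    rw [this]
    have hle : ∀ t, ‖b j t‖ₑ ≤ ‖g t‖ₑ * ‖x t - y t‖ₑ := by
      intro t
      simp only [hb]
      rw [enorm_mul]
      gcongr
      rw [← ofReal_norm, ← ofReal_norm]
      apply ENNReal.ofReal_le_ofReal
      rw [Complex.norm_real]
      exact hcoord _ _
    exact II_mono hle
  calc _ ≤ ∫⁻ κ : Ed 2, ENNReal.ofReal (1/ε^2) * (2 * (
          (ENNReal.ofReal (Real.exp (-(2*(ε/√2)^2*‖κ‖^2))) * ‖Ψ 0 κ‖ₑ^2) +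
          (ENNReal.ofReal (Real.exp (-(2*(ε/√2)^2*‖κ‖^2))) * ‖Ψ 1 κ‖ₑ^2))) := by
        refine lintegral_mono fun κ => ?_
        simp only [hrep]
        have hc : ∀ j, ‖Complex.I * (κ j : ℂ) * Ψ j κ‖ₑ^2 ≤ ENNReal.ofReal (‖κ‖^2) * ‖Ψ j κ‖ₑ^2 := by
          intro j
          rw [enorm_mul, mul_pow]
          gcongr
          rw [← ofReal_norm, ← ENNReal.ofReal_pow (norm_nonneg _)]
          apply ENNReal.ofReal_le_ofReal
          simp only [norm_mul, Complex.norm_I, one_mul, Complex.norm_real]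
          gcongr
          exact hcoord _ _
        calc _ ≤ ENNReal.ofReal (Real.exp (-(2*ε^2*‖κ‖^2))) * (2 * (ENNReal.ofReal (‖κ‖^2) * ‖Ψ 0 κ‖ₑ^2 +
                ENNReal.ofReal (‖κ‖^2) * ‖Ψ 1 κ‖ₑ^2)) := by
                gcongr
                refine (enorm_add_sq _ _).trans ?_
                gcongr <;> exact hc _
          _ = (ENNReal.ofReal (‖κ‖^2) * ENNReal.ofReal (Real.exp (-(2*ε^2*‖κ‖^2)))) * (2 * (‖Ψ 0 κ‖ₑ^2 + ‖Ψ 1 κ‖ₑ^2)) := by ring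
          _ ≤ (ENNReal.ofReal (1/ε^2) * ENNReal.ofReal (Real.exp (-(2*(ε/√2)^2*‖κ‖^2)))) * (2 * (‖Ψ 0 κ‖ₑ^2 + ‖Ψ 1 κ‖ₑ^2)) := by
                gcongr ?_ * _
                rw [← ENNReal.ofReal_mul (by positivity), ← ENNReal.ofReal_mul (by positivity)]
                exact ENNReal.ofReal_le_ofReal (near_gauss ε hε _)
          _ = _ := by ring
    _ ≤ ENNReal.ofReal (1/ε^2) * (2 * (2 * K3 ε * II (fun t => ‖g t‖ₑ * ‖x t - y t‖ₑ) +
          2 * K3 ε * II (fun t => ‖g t‖ₑ * ‖x t - y t‖ₑ))) := by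
        have := hΨm 0
        have := hΨm 1
        rw [lintegral_const_mul _ (by fun_prop), lintegral_const_mul _ (by fun_prop),
          lintegral_add_left (by fun_prop)]
        gcongr
        · exact hL3 0
        · exact hL3 1
    _ = _ := by ring


lemma meas_Phi2 {g : ℝ → ℂ} (hgm : Measurable g) {x y : ℝ → Ed 2} (hx : Measurable x)
    (hy : Measurable y) :
    Measurable (fun κ => ∫ t, g t * (Ew (x t) t κ - Ew (y t) t κ)) := by
  have : Measurable (fun p : Ed 2 × ℝ => g p.2 * (Ew (x p.2) p.2 p.1 - Ew (y p.2) p.2 p.1)) :=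
    (hgm.comp measurable_snd).mul ((Ew_meas (hx.comp measurable_snd) measurable_snd
      measurable_fst).sub (Ew_meas (hy.comp measurable_snd) measurable_snd
      measurable_fst))
  exact (this.stronglyMeasurable.integral_prod_right (ν := volume)).measurable

lemma Ew_int2 {g : ℝ → ℂ} (hg : Integrable g)
    {x y : ℝ → Ed 2} (hx : Measurable x) (hy : Measurable y) (κ : Ed 2) :
    Integrable (fun t => g t * (Ew (x t) t κ - Ew (y t) t κ)) := by
  simp only [mul_sub]
  exact (Ew_int (t := fun t => t) hg hx measurable_id κ).sub
    (Ew_int (t := fun t => t) hg hy measurable_id κ)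

/-- multiplier -/
noncomputable def mfun (r ε h : ℝ) : ℝ := h ^ (-r) * min 1 (h/ε)

lemma fixed_eps (r : ℝ) (G : ℝ → ℂ) (hG : Measurable G) (x y : ℝ → Ed 2)
    (hx : Measurable x) (hy : Measurable y)
    (hpos : ∀ t, 0 < ‖x t - y t‖)
    (hg : Integrable (fun t => G t * ((‖x t - y t‖ ^ (-r) : ℝ) : ℂ)))
    (hgd : Integrable (fun t => G t * ((‖x t - y t‖ ^ (-r) : ℝ) : ℂ) * ((‖x t - y t‖ : ℝ) : ℂ)))
    (ε : ℝ) (hε : 0 < ε) :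
    ∫⁻ κ : Ed 2, ENNReal.ofReal (Real.exp (-(2*ε^2*‖κ‖^2))) *
      ‖∫ t, (G t * ((‖x t - y t‖ ^ (-r) : ℝ) : ℂ)) * (Ew (x t) t κ - Ew (y t) t κ)‖ₑ^2 ≤
      24 * (K3 ε * II (fun t => ‖G t‖ₑ * ENNReal.ofReal (mfun r ε ‖x t - y t‖))) := by
  set g : ℝ → ℂ := fun t => G t * ((‖x t - y t‖ ^ (-r) : ℝ) : ℂ) with hgdef
  have hgm : Measurable g := by fun_prop
  set S : Set ℝ := {t | ‖x t - y t‖ ≤ ε} with hS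
  have hSm : MeasurableSet S := measurableSet_le (by fun_prop) measurable_const
  set a := S.indicator g with ha
  set b := Sᶜ.indicator g with hb
  have ham : Measurable a := hgm.indicator hSm
  have hbm : Measurable b := hgm.indicator hSm.compl
  have hai : Integrable a := hg.indicator hSm
  have hbi : Integrable b := hg.indicator hSm.compl
  have had : Integrable (fun t => a t * ((‖x t - y t‖ : ℝ) : ℂ)) := by
    refine (hgd.indicator hSm).congr (Filter.Eventually.of_forall fun t => ?_)
    by_cases ht : t ∈ S <;> simp [ha, ht, hgdef]
  have hgn : ∀ t, ‖g t‖ₑ = ‖G t‖ₑ * ENNReal.ofReal (‖x t - y t‖ ^ (-r)) := by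
    intro t
    simp only [hgdef]
    rw [enorm_mul]; congr 1
    rw [← ofReal_norm, Complex.norm_real, Real.norm_of_nonneg (Real.rpow_nonneg (norm_nonneg _) _)]
  set J := II (fun t => ‖G t‖ₑ * ENNReal.ofReal (mfun r ε ‖x t - y t‖)) with hJ
  have hbJ : II (fun t => ‖b t‖ₑ) ≤ J := by
    apply II_mono
    intro t
    by_cases ht : t ∈ S
    · simp [hb, ht]
    · have ht' : ε < ‖x t - y t‖ := not_le.mp ht
      have : b t = g t := by simp [hb, ht]
      rw [this, hgn, mfun, min_eq_left, mul_one]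
      rw [one_le_div hε]; exact ht'.le
  have haJ : ENNReal.ofReal (1/ε^2) * II (fun t => ‖a t‖ₑ * ‖x t - y t‖ₑ) ≤ J := by
    have h1 : ENNReal.ofReal (1/ε^2) * II (fun t => ‖a t‖ₑ * ‖x t - y t‖ₑ) =
        II (fun t => ENNReal.ofReal (1/ε) * (‖a t‖ₑ * ‖x t - y t‖ₑ)) := by
      unfold II
      rw [← lintegral_const_mul]
      · congr 1; funext p
        have : ENNReal.ofReal (1/ε^2) = ENNReal.ofReal (1/ε) * ENNReal.ofReal (1/ε) := by
          rw [← ENNReal.ofReal_mul (by positivity)]; congr 1; field_simp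
        rw [this]; ring
      · fun_prop
    rw [h1]
    apply II_mono
    intro t
    by_cases ht : t ∈ S
    · have ht' : ‖x t - y t‖ ≤ ε := ht
      have : a t = g t := by simp [ha, ht]
      rw [this, hgn, mfun, min_eq_right (by rw [div_le_one hε]; exact ht'),
        ENNReal.ofReal_mul (Real.rpow_nonneg (norm_nonneg _) _), div_eq_mul_one_div ‖x t - y t‖ ε,
        ENNReal.ofReal_mul (norm_nonneg _), ofReal_norm]
      apply le_of_eq; ring
    · simp [ha, ht]
  have hsplit : ∀ κ : Ed 2, ∫ t, g t * (Ew (x t) t κ - Ew (y t) t κ) =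
      (∫ t, a t * (Ew (x t) t κ - Ew (y t) t κ)) + ∫ t, b t * (Ew (x t) t κ - Ew (y t) t κ) := by
    intro κ
    rw [← integral_add (Ew_int2 hai hx hy κ) (Ew_int2 hbi hx hy κ)]
    congr 1; funext t
    rw [← add_mul]; congr 1
    simp only [ha, hb]
    exact (congrFun (Set.indicator_self_add_compl S g) t).symm
  have hmA := meas_Phi2 ham hx hy
  have hmB := meas_Phi2 hbm hx hy
  calc _ ≤ ∫⁻ κ : Ed 2, (2 * (ENNReal.ofReal (Real.exp (-(2*ε^2*‖κ‖^2))) *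
            ‖∫ t, a t * (Ew (x t) t κ - Ew (y t) t κ)‖ₑ^2) + 2 * (ENNReal.ofReal (Real.exp (-(2*ε^2*‖κ‖^2))) *
            ‖∫ t, b t * (Ew (x t) t κ - Ew (y t) t κ)‖ₑ^2)) := by
        refine lintegral_mono fun κ => ?_
        rw [show (∫ t, (G t * ((‖x t - y t‖ ^ (-r) : ℝ) : ℂ)) * (Ew (x t) t κ - Ew (y t) t κ)) = _ from hsplit κ]
        calc _ ≤ ENNReal.ofReal (Real.exp (-(2*ε^2*‖κ‖^2))) * (2 * _) := by
                gcongr; exact enorm_add_sq _ _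
          _ = _ := by ring
    _ ≤ 2 * (8 * (ENNReal.ofReal (1/ε^2) * (K3 ε * II (fun t => ‖a t‖ₑ * ‖x t - y t‖ₑ)))) +
          2 * (4 * (K3 ε * II (fun t => ‖b t‖ₑ))) := by
        rw [lintegral_add_left (by fun_prop), lintegral_const_mul _ (by fun_prop),
          lintegral_const_mul _ (by fun_prop)]
        gcongr
        · exact near_part a ham x y hx hy had ε hε
        · exact far_part b hbi hbm x y hx hy ε hε
    _ = 16 * (K3 ε * (ENNReal.ofReal (1/ε^2) * II (fun t => ‖a t‖ₑ * ‖x t - y t‖ₑ))) +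
          8 * (K3 ε * II (fun t => ‖b t‖ₑ)) := by ring
    _ ≤ 16 * (K3 ε * J) + 8 * (K3 ε * J) := by gcongr
    _ = _ := by ring

lemma m_int (r : ℝ) (hr : 0 < r) (hr1 : r < 1) (h : ℝ) (hh : 0 < h) :
    ∫⁻ ε in Set.Ioi (0:ℝ), ENNReal.ofReal (ε^(2*r-1)) * ENNReal.ofReal (mfun r ε h)^2 ≤
      ENNReal.ofReal (1/(2*r) + 1/(2-2*r)) := by
  have hu : Set.Ioi (0:ℝ) = Set.Ioc 0 h ∪ Set.Ioi h := (Set.Ioc_union_Ioi_eq_Ioi hh.le).symm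
  rw [hu]
  refine (lintegral_union_le _ _ _).trans ?_
  rw [ENNReal.ofReal_add (by positivity) (by have : 0 < 2 - 2*r := by linarith
                                             positivity)]
  have hs : ∀ a : ℝ, (h^a)^2 = h^(2*a) := by
    intro a
    rw [← Real.rpow_natCast, ← Real.rpow_mul hh.le]; congr 1; push_cast; ring
  gcongr
  · calc _ ≤ ∫⁻ ε in Set.Ioc 0 h, ENNReal.ofReal (h^(-2*r)) * ENNReal.ofReal (ε^(2*r-1)) := by
          refine setLIntegral_mono' measurableSet_Ioc fun ε hε => ?_
          have h0 : 0 < ε := hε.1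
          rw [mul_comm]
          gcongr
          rw [← ENNReal.ofReal_pow (by unfold mfun; positivity)]
          apply ENNReal.ofReal_le_ofReal
          have : -2*r = 2*(-r) := by ring
          rw [this, ← hs]
          gcongr
          · unfold mfun; positivity
          · unfold mfun
            exact mul_le_of_le_one_right (by positivity) (min_le_left _ _)
      _ = _ := by
          rw [lintegral_const_mul _ (by fun_prop), lint_rpow_Ioc _ _ (by linarith) hh,
            ← ENNReal.ofReal_mul (by positivity)]
          congr 1
          have : 2*r-1+1 = 2*r := by ring
          rw [this, ← mul_div_assoc, ← Real.rpow_add hh]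
          have : -2*r+2*r = 0 := by ring
          rw [this, Real.rpow_zero]
  · calc _ ≤ ∫⁻ ε in Set.Ioi h, ENNReal.ofReal (h^(2-2*r)) * ENNReal.ofReal (ε^(2*r-3)) := by
          refine setLIntegral_mono' measurableSet_Ioi fun ε hε => ?_
          have h0 : 0 < ε := hh.trans hε
          rw [← ENNReal.ofReal_pow (by unfold mfun; positivity), ← ENNReal.ofReal_mul (by positivity), ← ENNReal.ofReal_mul (by positivity)]
          apply ENNReal.ofReal_le_ofReal
          have hm : mfun r ε h ≤ h^(1-r)/ε := by
            unfold mfun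
            calc _ ≤ h^(-r) * (h/ε) := by gcongr; exact min_le_right _ _
              _ = h^(-r) * h^(1:ℝ)/ε := by rw [Real.rpow_one]; ring
              _ = _ := by rw [← Real.rpow_add hh]; congr 2; ring
          have h0m : 0 ≤ mfun r ε h := by unfold mfun; positivity
          calc _ ≤ ε^(2*r-1) * (h^(1-r)/ε)^2 := by gcongr
            _ = h^(2-2*r) * (ε^(2*r-1) / ε^(2:ℝ)) := by
                rw [div_pow, hs]
                have : 2*(1-r) = 2-2*r := by ring
                rw [this]
                norm_num
                ring
            _ = _ := by rw [← Real.rpow_sub h0]; congr 2; ring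
      _ = _ := by
          rw [lintegral_const_mul _ (by fun_prop), lint_rpow_Ioi _ _ (by linarith) hh,
            ← ENNReal.ofReal_mul (by positivity)]
          congr 1
          have : 2*r-3+1 = -(2-2*r) := by ring
          rw [this, ← mul_div_assoc, ← Real.rpow_add hh, neg_neg]
          have : 2-2*r+-(2-2*r) = 0 := by ring
          rw [this, Real.rpow_zero]


/-- subordination constant -/
noncomputable def cth (θ : ℝ) : ℝ := 2^(-θ) * (1/2) * Real.Gamma θ

lemma cth_pos (θ : ℝ) (hθ : 0 < θ) : 0 < cth θ := by
  unfold cth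
  have := Real.Gamma_pos_of_pos hθ
  positivity

lemma subord (θ : ℝ) (hθ : 0 < θ) (k : ℝ) (hk : 0 < k) :
    ∫⁻ ε in Set.Ioi (0:ℝ), ENNReal.ofReal (ε^(2*θ-1)) * ENNReal.ofReal (Real.exp (-(2*ε^2*k^2))) =
      ENNReal.ofReal (cth θ) * ENNReal.ofReal (k^(-(2*θ))) := by
  have h1 := integral_rpow_mul_exp_neg_mul_rpow (p := 2) (q := 2*θ-1) (b := 2*k^2) (by norm_num)
    (by linarith) (by positivity)
  have h2 : IntegrableOn (fun x : ℝ => x^(2*θ-1) * Real.exp (-(2*k^2) * x^(2:ℝ))) (Set.Ioi 0) :=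
    integrableOn_rpow_mul_exp_neg_mul_rpow (by linarith) (by norm_num) (by positivity)
  have h3 := ofReal_integral_eq_lintegral_ofReal h2 (by
    refine (ae_restrict_iff' measurableSet_Ioi).2 (Filter.Eventually.of_forall fun x hx => ?_)
    have : (0:ℝ) < x := hx
    simp only [Pi.zero_apply]
    positivity)
  rw [h1] at h3
  rw [← ENNReal.ofReal_mul (cth_pos θ hθ).le]
  refine Eq.trans ?_ (h3.symm.trans ?_)
  · refine setLIntegral_congr_fun measurableSet_Ioi fun ε hε => ?_
    have : (0:ℝ) < ε := hε
    rw [← ENNReal.ofReal_mul (by positivity)]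
    congr 3
    norm_num
    ring
  · congr 1
    unfold cth
    have e1 : (2*θ-1+1)/2 = θ := by ring
    have e2 : -(2*θ-1+1)/2 = -θ := by ring
    have e3 : (k^2)^(-θ) = k^(-(2*θ)) := by
      rw [← Real.rpow_natCast, ← Real.rpow_mul hk.le]; congr 1; push_cast; ring
    rw [e1, e2, Real.mul_rpow (by norm_num) (by positivity), e3]
    ring

/-- kernel constant -/
noncomputable def cker (r : ℝ) : ℝ :=
  (cth (r+3/4))⁻¹ * (24 * (4*Real.pi^2*√Real.pi) * (2 * (1/(2*r) + 1/(2-2*r))))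

lemma K3_rpow (r ε : ℝ) (hε : 0 < ε) :
    ENNReal.ofReal (ε^(2*(r+3/4)-1)) * K3 ε = ENNReal.ofReal (4*Real.pi^2*√Real.pi) * ENNReal.ofReal (ε^(2*r-1)) := by
  unfold K3
  rw [← ENNReal.ofReal_mul (by positivity), ← ENNReal.ofReal_mul (by positivity)]
  congr 1
  have : √ε/ε^2 = ε^(-(3/2):ℝ) := by
    rw [Real.sqrt_eq_rpow, ← Real.rpow_natCast, ← Real.rpow_sub hε]; norm_num
  rw [this]
  have : ε^(2*r-1) = ε^(2*(r+3/4)-1) * ε^(-(3/2):ℝ) := by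
    rw [← Real.rpow_add hε]; congr 1; ring
  rw [this]; ring

lemma mm_le (a b : ℝ≥0∞) : a * b ≤ a^2 + b^2 := by
  rcases le_total a b with h | h
  · calc a * b ≤ b * b := by gcongr
      _ = b^2 := by ring
      _ ≤ _ := le_add_self
  · calc a * b ≤ a * a := by gcongr
      _ = a^2 := by ring
      _ ≤ _ := le_self_add

lemma II_int (r : ℝ) (hr : 0 < r) (hr1 : r < 1) (a : ℝ → ℝ≥0∞) (ha : Measurable a)
    (h : ℝ → ℝ) (hm : Measurable h) (hpos : ∀ t, 0 < h t) :
    ∫⁻ ε in Set.Ioi (0:ℝ), ENNReal.ofReal (ε^(2*r-1)) *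
      II (fun t => a t * ENNReal.ofReal (mfun r ε (h t))) ≤
      ENNReal.ofReal (2 * (1/(2*r) + 1/(2-2*r))) * II a := by
  have hmm : ∀ {α : Type} [MeasurableSpace α] (e : α → ℝ) (k : α → ℝ), Measurable e → Measurable k →
      Measurable (fun p => mfun r (e p) (k p)) := by
    intro α _ e k he hk
    unfold mfun; fun_prop
  set A : ℝ × ℝ → ℝ≥0∞ := fun p => a p.1 * a p.2 * ‖p.1 - p.2‖ₑ ^ (-(1/2) : ℝ) with hA
  have hAm : Measurable A := by fun_prop
  set M : ℝ → ℝ → ℝ≥0∞ := fun ε t => ENNReal.ofReal (ε^(2*r-1)) * ENNReal.ofReal (mfun r ε (h t))^2 with hM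
  have hMm : Measurable (fun q : ℝ × ℝ => M q.1 q.2) := by
    have := hmm (fun q : ℝ × ℝ => q.1) (fun q => h q.2) measurable_fst (hm.comp measurable_snd)
    fun_prop
  have hMε : ∀ t, Measurable (fun ε => M ε t) := fun t => hMm.comp (measurable_id.prodMk measurable_const)
  calc _ ≤ ∫⁻ ε in Set.Ioi (0:ℝ), ∫⁻ p, A p * (M ε p.1 + M ε p.2) := by
        refine lintegral_mono fun ε => ?_
        unfold II
        simp only
        rw [← lintegral_const_mul']
        · refine lintegral_mono fun p => ?_
          simp only [hA, hM]
          calc _ = (a p.1 * a p.2 * ‖p.1 - p.2‖ₑ ^ (-(1/2) : ℝ)) * (ENNReal.ofReal (ε^(2*r-1)) *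
                  (ENNReal.ofReal (mfun r ε (h p.1)) * ENNReal.ofReal (mfun r ε (h p.2)))) := by ring
            _ ≤ _ := by
              rw [← mul_add]
              gcongr
              exact mm_le _ _
        · exact ENNReal.ofReal_ne_top
    _ = ∫⁻ p, ∫⁻ ε in Set.Ioi (0:ℝ), A p * (M ε p.1 + M ε p.2) := by
        rw [lintegral_lintegral_swap]
        apply Measurable.aemeasurable
        have h1 : Measurable (fun q : ℝ × ℝ × ℝ => M q.1 q.2.1) := hMm.comp (by fun_prop : Measurable (fun q : ℝ × ℝ × ℝ => (q.1, q.2.1)))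
        have h2 : Measurable (fun q : ℝ × ℝ × ℝ => M q.1 q.2.2) := hMm.comp (by fun_prop : Measurable (fun q : ℝ × ℝ × ℝ => (q.1, q.2.2)))
        exact (hAm.comp measurable_snd).mul (h1.add h2)
    _ ≤ ∫⁻ p, ENNReal.ofReal (2 * (1/(2*r) + 1/(2-2*r))) * A p := by
        refine lintegral_mono fun p => ?_
        have hadd : Measurable (fun ε => M ε p.1 + M ε p.2) := (hMε p.1).add (hMε p.2)
        simp only
        rw [lintegral_const_mul _ hadd, lintegral_add_left (hMε _), mul_comm]
        gcongr
        rw [two_mul, ENNReal.ofReal_add]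
        · gcongr
          · exact m_int r hr hr1 _ (hpos _)
          · exact m_int r hr hr1 _ (hpos _)
        all_goals
          have : 0 < 2 - 2*r := by linarith
          positivity
    _ = _ := by rw [lintegral_const_mul _ hAm]; rfl

lemma kernel_est (r : ℝ) (hr : 0 < r) (hr1 : r < 1) (G : ℝ → ℂ) (hG : Measurable G) (x y : ℝ → Ed 2)
    (hx : Measurable x) (hy : Measurable y)
    (hpos : ∀ t, 0 < ‖x t - y t‖)
    (hg : Integrable (fun t => G t * ((‖x t - y t‖ ^ (-r) : ℝ) : ℂ)))
    (hgd : Integrable (fun t => G t * ((‖x t - y t‖ ^ (-r) : ℝ) : ℂ) * ((‖x t - y t‖ : ℝ) : ℂ))) :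
    ∫⁻ κ : Ed 2, ENNReal.ofReal (‖κ‖^(-(2*(r+3/4)))) *
      ‖∫ t, (G t * ((‖x t - y t‖ ^ (-r) : ℝ) : ℂ)) * (Ew (x t) t κ - Ew (y t) t κ)‖ₑ^2 ≤
      ENNReal.ofReal (cker r) * II (fun t => ‖G t‖ₑ) := by
  have hθ : 0 < r + 3/4 := by linarith
  have hc := cth_pos _ hθ
  have hgm : Measurable (fun t => G t * ((‖x t - y t‖ ^ (-r) : ℝ) : ℂ)) := by fun_prop
  have hΦ := meas_Phi2 hgm hx hy
  set Φ : Ed 2 → ℂ := fun κ => ∫ t, (G t * ((‖x t - y t‖ ^ (-r) : ℝ) : ℂ)) * (Ew (x t) t κ - Ew (y t) t κ) with hΦd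
  have hc0 : ENNReal.ofReal (cth (r+3/4))⁻¹ * ENNReal.ofReal (cth (r+3/4)) = 1 := by
    rw [← ENNReal.ofReal_mul (by positivity), inv_mul_cancel₀ hc.ne', ENNReal.ofReal_one]
  have h2r : 0 < 2 - 2*r := by linarith
  have hae : ∀ᵐ κ : Ed 2, κ ≠ 0 := by
    rw [ae_iff]; simp
  calc _ = ENNReal.ofReal (cth (r+3/4))⁻¹ * ∫⁻ κ : Ed 2, ∫⁻ ε in Set.Ioi (0:ℝ),
          ENNReal.ofReal (ε^(2*(r+3/4)-1)) * ENNReal.ofReal (Real.exp (-(2*ε^2*‖κ‖^2))) * ‖Φ κ‖ₑ^2 := by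
        rw [← lintegral_const_mul']
        · refine lintegral_congr_ae ?_
          filter_upwards [hae] with κ hκ
          rw [lintegral_mul_const _ (by fun_prop), subord _ hθ _ (norm_pos_iff.2 hκ),
            ← mul_assoc, ← mul_assoc, hc0, one_mul]
        · exact ENNReal.ofReal_ne_top
    _ = ENNReal.ofReal (cth (r+3/4))⁻¹ * ∫⁻ ε in Set.Ioi (0:ℝ), ENNReal.ofReal (ε^(2*(r+3/4)-1)) *
          ∫⁻ κ : Ed 2, ENNReal.ofReal (Real.exp (-(2*ε^2*‖κ‖^2))) * ‖Φ κ‖ₑ^2 := by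
        congr 1
        rw [lintegral_lintegral_swap]
        · congr 1; funext ε
          rw [← lintegral_const_mul' _ _ ENNReal.ofReal_ne_top]
          simp only [mul_assoc]
        · apply Measurable.aemeasurable
          have := hΦ.comp (measurable_fst : Measurable (Prod.fst : Ed 2 × ℝ → Ed 2))
          simp only [Function.comp_def] at this
          simp only [Function.uncurry_def]
          fun_prop
    _ ≤ ENNReal.ofReal (cth (r+3/4))⁻¹ * ∫⁻ ε in Set.Ioi (0:ℝ),
          ENNReal.ofReal (24 * (4*Real.pi^2*√Real.pi)) * (ENNReal.ofReal (ε^(2*r-1)) *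
          II (fun t => ‖G t‖ₑ * ENNReal.ofReal (mfun r ε ‖x t - y t‖))) := by
        refine mul_le_mul' le_rfl ?_
        refine setLIntegral_mono' measurableSet_Ioi fun ε hε => ?_
        have hε : 0 < ε := hε
        calc _ ≤ ENNReal.ofReal (ε^(2*(r+3/4)-1)) * (24 * (K3 ε * II (fun t => ‖G t‖ₑ * ENNReal.ofReal (mfun r ε ‖x t - y t‖)))) := by
              gcongr
              exact fixed_eps r G hG x y hx hy hpos hg hgd ε hε
          _ = 24 * ((ENNReal.ofReal (ε^(2*(r+3/4)-1)) * K3 ε) * II (fun t => ‖G t‖ₑ * ENNReal.ofReal (mfun r ε ‖x t - y t‖))) := by ring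
          _ = _ := by
              rw [K3_rpow r ε hε, ENNReal.ofReal_mul (p := 24) (by norm_num)]
              rw [show ENNReal.ofReal 24 = 24 by norm_num]
              ring
    _ ≤ ENNReal.ofReal (cth (r+3/4))⁻¹ * (ENNReal.ofReal (24 * (4*Real.pi^2*√Real.pi)) *
          (ENNReal.ofReal (2 * (1/(2*r) + 1/(2-2*r))) * II (fun t => ‖G t‖ₑ))) := by
        refine mul_le_mul' le_rfl ?_
        rw [lintegral_const_mul' _ _ ENNReal.ofReal_ne_top]
        gcongr
        exact II_int r hr hr1 _ (by fun_prop) _ (by fun_prop) hpos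
    _ = _ := by
        rw [← mul_assoc, ← mul_assoc, ← ENNReal.ofReal_mul (by positivity), ← ENNReal.ofReal_mul (by positivity)]
        unfold cker
        ring_nf


/-- unnormalised half wave -/
noncomputable def Uw (a : Ed 2 → ℂ) (t : ℝ) (x : Ed 2) : ℂ := ∫ κ, Ew x t κ * a κ

/-- weighted square norm -/
noncomputable def Sn (θ : ℝ) (a : Ed 2 → ℂ) : ℝ≥0∞ := ∫⁻ κ, ENNReal.ofReal (‖κ‖^(2*θ)) * ‖a κ‖ₑ^2

lemma Uw_norm_le (a : Ed 2 → ℂ) (t x) : ‖Uw a t x‖ ≤ ∫ κ, ‖a κ‖ := by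
  unfold Uw
  refine (norm_integral_le_integral_norm _).trans ?_
  simp [Ew_norm]

lemma Uw_meas {α : Type*} [MeasurableSpace α] (a : Ed 2 → ℂ) (ha : Measurable a)
    {t : α → ℝ} {x : α → Ed 2} (ht : Measurable t) (hx : Measurable x) :
    Measurable (fun ω => Uw a (t ω) (x ω)) := by
  unfold Uw
  have : Measurable (fun p : α × Ed 2 => Ew (x p.1) (t p.1) p.2 * a p.2) :=
    (Ew_meas (hx.comp measurable_fst) (ht.comp measurable_fst) measurable_snd).mul
      (ha.comp measurable_snd)
  exact (this.stronglyMeasurable.integral_prod_right (ν := volume)).measurable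

lemma Uw_int (a : Ed 2 → ℂ) (ha : Integrable a) (t x) : Integrable (fun κ => Ew x t κ * a κ) :=
  ha.bdd_mul (c := 1) (Ew_meas measurable_const measurable_const measurable_id).aestronglyMeasurable
    (by simp [Ew_norm])

lemma CS_weight (θ : ℝ) (a Φ : Ed 2 → ℂ) (ha : Measurable a) (hΦ : Measurable Φ) :
    (∫⁻ κ, ‖a κ‖ₑ * ‖Φ κ‖ₑ)^2 ≤ Sn θ a * ∫⁻ κ, ENNReal.ofReal (‖κ‖^(-(2*θ))) * ‖Φ κ‖ₑ^2 := by
  have hae : ∀ᵐ κ : Ed 2, κ ≠ 0 := by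
    rw [ae_iff]; simp
  have h := ENNReal.lintegral_mul_le_Lp_mul_Lq (volume : Measure (Ed 2)) (p := 2) (q := 2)
    (Real.HolderConjugate.two_two)
    (f := fun κ => ENNReal.ofReal (‖κ‖^θ) * ‖a κ‖ₑ) (g := fun κ => ENNReal.ofReal (‖κ‖^(-θ)) * ‖Φ κ‖ₑ)
    (by fun_prop) (by fun_prop)
  have e0 : ∫⁻ κ, ‖a κ‖ₑ * ‖Φ κ‖ₑ = ∫⁻ κ : Ed 2, ((fun κ => ENNReal.ofReal (‖κ‖^θ) * ‖a κ‖ₑ) * (fun κ => ENNReal.ofReal (‖κ‖^(-θ)) * ‖Φ κ‖ₑ)) κ := by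
    refine lintegral_congr_ae ?_
    filter_upwards [hae] with κ hκ
    have hk := norm_pos_iff.2 hκ
    simp only [Pi.mul_apply]
    have : ENNReal.ofReal (‖κ‖^θ) * ENNReal.ofReal (‖κ‖^(-θ)) = 1 := by
      rw [← ENNReal.ofReal_mul (by positivity), ← Real.rpow_add hk]; simp
    calc _ = (ENNReal.ofReal (‖κ‖^θ) * ENNReal.ofReal (‖κ‖^(-θ))) * (‖a κ‖ₑ * ‖Φ κ‖ₑ) := by rw [this, one_mul]
      _ = _ := by ring
  have es : ∀ (s : ℝ) (b : Ed 2 → ℂ), ∫⁻ κ, (ENNReal.ofReal (‖κ‖^s) * ‖b κ‖ₑ)^(2:ℝ) =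
      ∫⁻ κ, ENNReal.ofReal (‖κ‖^(2*s)) * ‖b κ‖ₑ^2 := by
    intro s b
    congr 1; funext κ
    rw [ENNReal.rpow_two, mul_pow, ← ENNReal.ofReal_pow (by positivity)]
    congr 2
    rw [← Real.rpow_natCast, ← Real.rpow_mul (norm_nonneg _)]; congr 1; push_cast; ring
  have e1 := es θ a
  have e2 := es (-θ) Φ
  rw [← e0] at h
  simp only [e1, e2] at h
  calc _ ≤ _ := pow_le_pow_left' h 2
    _ = _ := by
      have e3 : ∀ z : ℝ≥0∞, (z^(1/2:ℝ))^2 = z := by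
        intro z; rw [← ENNReal.rpow_natCast, ← ENNReal.rpow_mul]; norm_num
      rw [mul_pow, e3, e3]
      unfold Sn
      congr 3
      simp

lemma alg_absorb (A B S : ℝ≥0∞) (hA : A ≠ ⊤) (h : A^2 ≤ S * (B * A^(3/2:ℝ))) : A ≤ B^2 * S^2 := by
  by_cases h0 : A = 0
  · simp [h0]
  have h1 : A^2 = A^(1/2:ℝ) * A^(3/2:ℝ) := by
    rw [← ENNReal.rpow_add _ _ h0 hA]; norm_num
  have h3 : A^(1/2:ℝ) ≤ S * B := by
    rw [h1, ← mul_assoc] at h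
    exact (ENNReal.mul_le_mul_iff_left (by simp [h0, hA]) (by simp [h0, hA])).1 h
  calc A = (A^(1/2:ℝ))^2 := by rw [← ENNReal.rpow_natCast, ← ENNReal.rpow_mul]; norm_num
    _ ≤ (S * B)^2 := by gcongr
    _ = _ := by ring

set_option maxHeartbeats 800000 in
lemma dual_fixed (r : ℝ) (hr : 0 < r) (hr1 : r < 1) (a : Ed 2 → ℂ) (ham : Measurable a)
    (ha : Integrable a) (x y : ℝ → Ed 2) (hx : Measurable x) (hy : Measurable y)
    (c Cb : ℝ) (hc : 0 < c) (hlow : ∀ t, c ≤ ‖x t - y t‖) (hup : ∀ t, ‖x t - y t‖ ≤ Cb) (M : ℝ) :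
    ∫⁻ t in Set.Icc (-M) M, (‖Uw a t (x t) - Uw a t (y t)‖ₑ * ENNReal.ofReal (‖x t - y t‖^(-r)))^4 ≤
      ENNReal.ofReal (12 * cker r)^2 * Sn (r+3/4) a ^2 := by
  have hpos : ∀ t, 0 < ‖x t - y t‖ := fun t => hc.trans_le (hlow t)
  set B := ∫ κ, ‖a κ‖ with hB
  have hB0 : 0 ≤ B := integral_nonneg fun _ => norm_nonneg _
  set w : ℝ → ℝ := fun t => ‖x t - y t‖^(-r) with hw
  have hw0 : ∀ t, 0 ≤ w t := fun t => by simp only [hw]; positivity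
  have hwm : Measurable w := by fun_prop
  have hwle : ∀ t, w t ≤ c^(-r) := fun t =>
    Real.rpow_le_rpow_of_nonpos hc (hlow t) (by linarith)
  set D : ℝ → ℂ := fun t => Uw a t (x t) - Uw a t (y t) with hD
  have hDm : Measurable D := (Uw_meas a ham measurable_id hx).sub (Uw_meas a ham measurable_id hy)
  have hDle : ∀ t, ‖D t‖ ≤ 2 * B := fun t => by
    refine (norm_sub_le _ _).trans ?_
    have := Uw_norm_le a t (x t)
    have := Uw_norm_le a t (y t)
    linarith
  set I := Set.Icc (-M) M with hI
  have hIm : MeasurableSet I := measurableSet_Icc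
  set v : ℝ → ℂ := I.indicator (fun t => D t * (w t : ℂ)) with hv
  have hvm : Measurable v := Measurable.indicator (by fun_prop) hIm
  set K := 2 * B * c^(-r) with hK
  have hK0 : 0 ≤ K := by positivity
  have hvle : ∀ t, ‖v t‖ ≤ K := by
    intro t
    refine (norm_indicator_le_norm_self _ _).trans ?_
    simp only [norm_mul, Complex.norm_real, Real.norm_of_nonneg (hw0 t)]
    exact mul_le_mul (hDle t) (hwle t) (hw0 t) (by positivity)
  set G : ℝ → ℂ := fun t => ((‖v t‖^2 : ℝ) : ℂ) * (starRingEnd ℂ) (v t) with hG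
  have hGm : Measurable G := by
    have : Measurable (fun t => (starRingEnd ℂ) (v t)) := Complex.continuous_conj.measurable.comp hvm
    fun_prop
  have hGn : ∀ t, ‖G t‖ = ‖v t‖^3 := by
    intro t
    simp only [hG, norm_mul, Complex.norm_real, norm_pow, norm_norm, RCLike.norm_conj]
    ring
  have hGsupp : ∀ t, t ∉ I → G t = 0 := by
    intro t ht; simp [hG, hv, ht]
  have hGb : ∀ (u : ℝ → ℂ) (Cu : ℝ), Measurable u → (∀ t, ‖u t‖ ≤ Cu) → Integrable (fun t => G t * u t) := by
    intro u Cu hu hub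
    have : (fun t => G t * u t) = I.indicator (fun t => G t * u t) := by
      funext t
      by_cases ht : t ∈ I
      · simp [ht]
      · simp [ht, hGsupp t ht]
    rw [this, integrable_indicator_iff hIm]
    refine Measure.integrableOn_of_bounded (M := K^3 * Cu) (by simp [hI]) (hGm.mul hu).aestronglyMeasurable ?_
    refine Filter.Eventually.of_forall fun t => ?_
    rw [norm_mul, hGn]
    have := hub t
    have := hvle t
    gcongr
  have hg : Integrable (fun t => G t * ((w t : ℝ) : ℂ)) := hGb _ (c^(-r)) (by fun_prop) (fun t => by
    rw [Complex.norm_real, Real.norm_of_nonneg (hw0 t)]; exact hwle t)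
  have hgd : Integrable (fun t => G t * ((w t : ℝ) : ℂ) * ((‖x t - y t‖ : ℝ) : ℂ)) := by
    simp only [mul_assoc]
    refine hGb (fun t => ((w t : ℝ) : ℂ) * ((‖x t - y t‖ : ℝ) : ℂ)) (c^(-r)*Cb) (by fun_prop) (fun t => ?_)
    rw [norm_mul, Complex.norm_real, Real.norm_of_nonneg (hw0 t), Complex.norm_real, norm_norm]
    exact mul_le_mul (hwle t) (hup t) (norm_nonneg _) (by positivity)
  set Φ : Ed 2 → ℂ := fun κ => ∫ t, (G t * ((w t : ℝ) : ℂ)) * (Ew (x t) t κ - Ew (y t) t κ) with hΦ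
  have hΦm : Measurable Φ := meas_Phi2 (by fun_prop) hx hy
  have hker := kernel_est r hr hr1 G hGm x y hx hy hpos hg hgd
  set A := ∫⁻ t, ‖v t‖ₑ^4 with hA
  have hAeq : ∫⁻ t in I, (‖D t‖ₑ * ENNReal.ofReal (w t))^4 = A := by
    rw [← lintegral_indicator hIm]
    congr 1; funext t
    by_cases ht : t ∈ I
    · simp only [hv, ht, Set.indicator_of_mem, enorm_mul]
      congr 2
      rw [← ofReal_norm, Complex.norm_real, Real.norm_of_nonneg (hw0 t)]
    · simp [hv, ht]
  have hGv : ∀ t, G t * v t = ((‖v t‖^4 : ℝ) : ℂ) := by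
    intro t
    simp only [hG]
    rw [mul_assoc, ← Complex.normSq_eq_conj_mul_self, Complex.normSq_eq_norm_sq]
    push_cast; ring
  have hvi : Integrable (fun t => ‖v t‖^4) := by
    have := (hGb v K hvm hvle).norm
    refine this.congr (Filter.Eventually.of_forall fun t => ?_)
    simp only
    rw [hGv, Complex.norm_real, Real.norm_of_nonneg (by positivity)]
  have hA1 : A = ENNReal.ofReal (∫ t, ‖v t‖^4) := by
    rw [ofReal_integral_eq_lintegral_ofReal hvi (Filter.Eventually.of_forall fun t => by simp only [Pi.zero_apply]; positivity), hA]
    congr 1; funext t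
    rw [ENNReal.ofReal_pow (norm_nonneg _), ofReal_norm]
  have hAfin : A ≠ ⊤ := by rw [hA1]; exact ENNReal.ofReal_ne_top
  have hA2 : A = ‖∫ t, G t * v t‖ₑ := by
    simp only [hGv]
    rw [integral_complex_ofReal, hA1, ← ofReal_norm]
    congr 1
    rw [Complex.norm_real, Real.norm_of_nonneg (integral_nonneg fun t => by positivity)]
  have hA3 : ∫ t, G t * v t = ∫ κ, a κ * Φ κ := by
    have h1 : ∀ t, G t * v t = ∫ κ, (G t * ((w t : ℝ) : ℂ)) * (Ew (x t) t κ - Ew (y t) t κ) * a κ := by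
      intro t
      by_cases ht : t ∈ I
      · have : v t = D t * (w t : ℂ) := by simp [hv, ht]
        rw [this]
        simp only [mul_assoc (G t * ((w t : ℝ) : ℂ))]
        rw [integral_const_mul]
        have : ∫ κ, (Ew (x t) t κ - Ew (y t) t κ) * a κ = D t := by
          simp only [sub_mul, hD, Uw]
          rw [integral_sub (Uw_int a ha t _) (Uw_int a ha t _)]
        rw [this]; ring
      · simp [hGsupp t ht]
    simp only [h1]
    rw [integral_integral_swap]
    · congr 1; funext κ
      rw [integral_mul_const, mul_comm]
    · have hprod := hg.mul_prod ha
      have h2 : Integrable (fun p : ℝ × Ed 2 => (Ew (x p.1) p.1 p.2 - Ew (y p.1) p.1 p.2) *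
          ((G p.1 * ((w p.1 : ℝ) : ℂ)) * a p.2)) (volume.prod volume) := by
        refine hprod.bdd_mul (c := 2) ?_ ?_
        · exact ((Ew_meas (hx.comp measurable_fst) measurable_fst measurable_snd).sub
            (Ew_meas (hy.comp measurable_fst) measurable_fst measurable_snd)).aestronglyMeasurable
        · refine Filter.Eventually.of_forall fun p => (norm_sub_le _ _).trans ?_
          rw [Ew_norm, Ew_norm]; norm_num
      refine h2.congr (Filter.Eventually.of_forall fun p => ?_)
      simp only [Function.uncurry_def]
      ring
  have hII : II (fun t => ‖G t‖ₑ) ≤ 12 * A^(3/2:ℝ) := by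
    have := HLS (fun t => ‖G t‖ₑ) (by fun_prop) (by simp)
    refine this.trans (le_of_eq ?_)
    congr 2
    rw [hA]; congr 1; funext t
    rw [← ofReal_norm, hGn, ENNReal.ofReal_pow (norm_nonneg _), ofReal_norm, ← ENNReal.rpow_natCast, ← ENNReal.rpow_natCast,
      ← ENNReal.rpow_mul]
    norm_num
  have hA4 : A^2 ≤ Sn (r+3/4) a * (ENNReal.ofReal (12 * cker r) * A^(3/2:ℝ)) := by
    calc A^2 ≤ (∫⁻ κ, ‖a κ‖ₑ * ‖Φ κ‖ₑ)^2 := by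
          rw [hA2, hA3]
          gcongr
          refine (enorm_integral_le_lintegral_enorm _).trans (le_of_eq ?_)
          simp [enorm_mul]
      _ ≤ _ := CS_weight (r+3/4) a Φ ham hΦm
      _ ≤ Sn (r+3/4) a * (ENNReal.ofReal (cker r) * (12 * A^(3/2:ℝ))) := by
          gcongr
          exact hker.trans (by gcongr)
      _ = _ := by
          rw [ENNReal.ofReal_mul (by norm_num), show ENNReal.ofReal 12 = 12 by norm_num]
          ring
  rw [hAeq]
  exact alg_absorb A _ _ hAfin hA4


/-- difference quotient -/
noncomputable def Qd (r : ℝ) (a : Ed 2 → ℂ) (t : ℝ) (x y : Ed 2) : ℝ≥0∞ :=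
  ‖Uw a t x - Uw a t y‖ₑ * ENNReal.ofReal (‖x - y‖^(-r))

lemma Qd_meas {α : Type*} [MeasurableSpace α] (r : ℝ) (a : Ed 2 → ℂ) (ha : Measurable a)
    {t : α → ℝ} {x y : α → Ed 2} (ht : Measurable t) (hx : Measurable x) (hy : Measurable y) :
    Measurable (fun ω => Qd r a (t ω) (x ω) (y ω)) := by
  unfold Qd
  have h1 := Uw_meas a ha ht hx
  have h2 := Uw_meas a ha ht hy
  fun_prop

lemma selector (r : ℝ) (a : Ed 2 → ℂ) (ham : Measurable a) (X Y : ℕ → Ed 2) (hXY : ∀ n, X n ≠ Y n)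
    (n : ℕ) : ∃ x y : ℝ → Ed 2, Measurable x ∧ Measurable y ∧ (∃ c Cb : ℝ, 0 < c ∧
      (∀ t, c ≤ ‖x t - y t‖) ∧ (∀ t, ‖x t - y t‖ ≤ Cb)) ∧
      ∀ t, ∀ j ≤ n, Qd r a t (X j) (Y j) ≤ Qd r a t (x t) (y t) := by
  induction n with
  | zero =>
    refine ⟨fun _ => X 0, fun _ => Y 0, measurable_const, measurable_const,
      ⟨‖X 0 - Y 0‖, ‖X 0 - Y 0‖, norm_pos_iff.2 (sub_ne_zero.2 (hXY 0)), by simp, by simp⟩, ?_⟩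
    intro t j hj
    obtain rfl : j = 0 := by omega
    exact le_rfl
  | succ n ih =>
    obtain ⟨x, y, hx, hy, ⟨c, Cb, hc, hl, hu⟩, hq⟩ := ih
    set S : Set ℝ := {t | Qd r a t (X (n+1)) (Y (n+1)) ≤ Qd r a t (x t) (y t)} with hS
    have hSm : MeasurableSet S := measurableSet_le
      (Qd_meas r a ham measurable_id measurable_const measurable_const)
      (Qd_meas r a ham measurable_id hx hy)
    classical
    refine ⟨S.piecewise x (fun _ => X (n+1)), S.piecewise y (fun _ => Y (n+1)),
      hx.piecewise hSm measurable_const, hy.piecewise hSm measurable_const,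
      ⟨min c ‖X (n+1) - Y (n+1)‖, max Cb ‖X (n+1) - Y (n+1)‖,
        lt_min hc (norm_pos_iff.2 (sub_ne_zero.2 (hXY _))), ?_, ?_⟩, ?_⟩
    · intro t
      by_cases ht : t ∈ S
      · simp [ht, hl t]
      · simp [ht]
    · intro t
      by_cases ht : t ∈ S
      · simp [ht, hu t]
      · simp [ht]
    · intro t j hj
      by_cases ht : t ∈ S
      · simp only [ht, Set.piecewise_eq_of_mem]
        rcases Nat.lt_or_ge j (n+1) with h | h
        · exact hq t j (by omega)
        · obtain rfl : j = n+1 := by omega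
          exact ht
      · simp only [ht, not_false_eq_true, Set.piecewise_eq_of_notMem]
        rcases Nat.lt_or_ge j (n+1) with h | h
        · exact (hq t j (by omega)).trans (not_le.mp ht).le
        · obtain rfl : j = n+1 := by omega
          exact le_rfl

lemma sup_est (r : ℝ) (hr : 0 < r) (hr1 : r < 1) (a : Ed 2 → ℂ) (ham : Measurable a)
    (ha : Integrable a) (X Y : ℕ → Ed 2) (hXY : ∀ n, X n ≠ Y n) :
    ∫⁻ t, (⨆ n, Qd r a t (X n) (Y n))^4 ≤ ENNReal.ofReal (12 * cker r)^2 * Sn (r+3/4) a ^2 := by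
  set F : ℕ → ℝ → ℝ≥0∞ := fun n => (Set.Icc (-(n:ℝ)) n).indicator
    (fun t => (⨆ j ≤ n, Qd r a t (X j) (Y j))^4) with hF
  have hFm : ∀ n, Measurable (F n) := by
    intro n
    refine Measurable.indicator ?_ measurableSet_Icc
    refine Measurable.pow_const ?_ 4
    refine Measurable.iSup fun j => Measurable.iSup fun _ => ?_
    exact Qd_meas r a ham measurable_id measurable_const measurable_const
  have hmono : Monotone F := by
    intro n m hnm t
    simp only [hF]
    have hsub : Set.Icc (-(n:ℝ)) n ⊆ Set.Icc (-(m:ℝ)) m := by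
      have : (n:ℝ) ≤ m := by exact_mod_cast hnm
      exact Set.Icc_subset_Icc (by linarith) this
    refine (Set.indicator_le_indicator_of_subset hsub (fun _ => zero_le) t).trans ?_
    refine Set.indicator_le_indicator ?_
    refine pow_le_pow_left' ?_ 4
    exact biSup_mono fun j hj => hj.trans hnm
  calc _ ≤ ∫⁻ t, ⨆ n, F n t := by
        refine lintegral_mono fun t => ?_
        have : (⨆ n, Qd r a t (X n) (Y n))^4 = ⨆ n, (Qd r a t (X n) (Y n))^4 := by
          rw [ENNReal.iSup_pow]
        rw [this]
        refine iSup_le fun j => ?_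
        obtain ⟨N, hN⟩ := exists_nat_ge |t|
        refine le_trans ?_ (le_iSup _ (max j N))
        have ht : t ∈ Set.Icc (-((max j N : ℕ):ℝ)) ((max j N : ℕ):ℝ) := by
          rw [Set.mem_Icc, ← abs_le]
          exact hN.trans (by exact_mod_cast le_max_right _ _)
        simp only [hF]
        rw [Set.indicator_of_mem ht]
        refine pow_le_pow_left' ?_ 4
        exact le_iSup₂_of_le (f := fun j (_ : j ≤ max _ N) => Qd r a t (X j) (Y j)) j (le_max_left _ _) le_rfl
    _ = ⨆ n, ∫⁻ t, F n t := lintegral_iSup hFm hmono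
    _ ≤ _ := by
        refine iSup_le fun n => ?_
        obtain ⟨x, y, hx, hy, ⟨c, Cb, hc, hl, hu⟩, hq⟩ := selector r a ham X Y hXY n
        refine le_trans ?_ (dual_fixed r hr hr1 a ham ha x y hx hy c Cb hc hl hu n)
        simp only [hF]
        rw [lintegral_indicator measurableSet_Icc]
        refine lintegral_mono fun t => ?_
        refine pow_le_pow_left' ?_ 4
        exact iSup₂_le fun j hj => hq t j hj


lemma mink_eta (μ ν : Measure ℝ) [SFinite μ] [SFinite ν] (H : ℝ → ℝ → ℝ≥0∞)
    (hH : Measurable (fun p : ℝ × ℝ => H p.1 p.2)) (N : ℝ → ℝ≥0∞) (hN : Measurable N)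
    (hNfin : ∫⁻ s, N s ∂ν ≠ ⊤) (hN0 : ∀ s, N s ≠ 0) (h4 : ∀ s, ∫⁻ t, H t s ^ 4 ∂μ ≤ N s ^ 4) :
    ∫⁻ t, (∫⁻ s, H t s ∂ν)^4 ∂μ ≤ (∫⁻ s, N s ∂ν)^4 := by
  have hae : ∀ᵐ s ∂ν, N s < ⊤ := ae_lt_top hN hNfin
  have hHt : ∀ t, Measurable (fun s => H t s) := fun t => hH.comp (measurable_const.prodMk measurable_id)
  have hHs : ∀ s, Measurable (fun t => H t s) := fun s => hH.comp (measurable_id.prodMk measurable_const)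
  have hp : ∀ t, (∫⁻ s, H t s ∂ν)^4 ≤ (∫⁻ s, H t s ^4 * (N s ^ (3:ℕ))⁻¹ ∂ν) * (∫⁻ s, N s ∂ν)^3 := by
    intro t
    have hconj : Real.HolderConjugate 4 (4/3) := by
      rw [Real.holderConjugate_iff]; norm_num
    have h := ENNReal.lintegral_mul_le_Lp_mul_Lq ν hconj
      (f := fun s => H t s * (N s ^ (3/4:ℝ))⁻¹) (g := fun s => N s ^ (3/4:ℝ))
      ((hHt t).mul (hN.pow_const _).inv).aemeasurable (hN.pow_const _).aemeasurable
    have e0 : ∫⁻ s, ((fun s => H t s * (N s ^ (3/4:ℝ))⁻¹) * fun s => N s ^ (3/4:ℝ)) s ∂ν = ∫⁻ s, H t s ∂ν := by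
      refine lintegral_congr_ae ?_
      filter_upwards [hae] with s hs
      simp only [Pi.mul_apply]
      rw [mul_assoc, ENNReal.inv_mul_cancel, mul_one]
      · simp [hN0 s, hs.ne]
      · simp [hN0 s, hs.ne]
    have e1 : ∀ s, (H t s * (N s ^ (3/4:ℝ))⁻¹)^(4:ℝ) = H t s ^4 * (N s ^ (3:ℕ))⁻¹ := by
      intro s
      rw [ENNReal.mul_rpow_of_nonneg _ _ (by norm_num), ENNReal.inv_rpow, ← ENNReal.rpow_mul,
        ← ENNReal.rpow_natCast, ← ENNReal.rpow_natCast]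
      norm_num
    have e2 : ∀ s, (N s ^ (3/4:ℝ))^(4/3:ℝ) = N s := by
      intro s
      rw [← ENNReal.rpow_mul]; norm_num
    rw [e0] at h
    simp only [e1, e2] at h
    calc _ ≤ _ := pow_le_pow_left' h 4
      _ = _ := by
        rw [mul_pow, ← ENNReal.rpow_natCast, ← ENNReal.rpow_natCast, ← ENNReal.rpow_natCast, ← ENNReal.rpow_mul, ← ENNReal.rpow_mul]
        norm_num
  calc _ ≤ ∫⁻ t, (∫⁻ s, H t s ^4 * (N s ^ (3:ℕ))⁻¹ ∂ν) * (∫⁻ s, N s ∂ν)^3 ∂μ := lintegral_mono hp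
    _ = (∫⁻ t, ∫⁻ s, H t s ^4 * (N s ^ (3:ℕ))⁻¹ ∂ν ∂μ) * (∫⁻ s, N s ∂ν)^3 := by
        rw [lintegral_mul_const' _ _ (by simp [hNfin])]
    _ = (∫⁻ s, ∫⁻ t, H t s ^4 * (N s ^ (3:ℕ))⁻¹ ∂μ ∂ν) * (∫⁻ s, N s ∂ν)^3 := by
        rw [lintegral_lintegral_swap]
        apply Measurable.aemeasurable
        simp only [Function.uncurry_def]
        exact (hH.pow_const 4).mul ((hN.comp measurable_snd).pow_const 3).inv
    _ ≤ (∫⁻ s, N s ∂ν) * (∫⁻ s, N s ∂ν)^3 := by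
        refine mul_le_mul' ?_ le_rfl
        refine lintegral_mono_ae ?_
        filter_upwards [hae] with s hs
        rw [lintegral_mul_const _ ((hHs s).pow_const 4)]
        calc _ ≤ N s ^ 4 * (N s ^ 3)⁻¹ := by gcongr; exact h4 s
          _ = N s * (N s^3 * (N s ^ 3)⁻¹) := by ring
          _ = N s := by
            rw [ENNReal.mul_inv_cancel, mul_one]
            · simp [hN0 s]
            · simp [hs.ne]
    _ = _ := by ring

lemma mink (μ ν : Measure ℝ) [SFinite μ] [IsFiniteMeasure ν] (H : ℝ → ℝ → ℝ≥0∞)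
    (hH : Measurable (fun p : ℝ × ℝ => H p.1 p.2)) (N : ℝ → ℝ≥0∞) (hN : Measurable N)
    (hNfin : ∫⁻ s, N s ∂ν ≠ ⊤) (h4 : ∀ s, ∫⁻ t, H t s ^ 4 ∂μ ≤ N s ^ 4) :
    (∫⁻ t, (∫⁻ s, H t s ∂ν)^4 ∂μ)^(1/4:ℝ) ≤ ∫⁻ s, N s ∂ν := by
  have key : ∀ η : ℝ≥0∞, η ≠ 0 → η ≠ ⊤ → (∫⁻ t, (∫⁻ s, H t s ∂ν)^4 ∂μ)^(1/4:ℝ) ≤ ∫⁻ s, N s ∂ν + η * ν Set.univ := by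
    intro η h0 h1
    have h := mink_eta μ ν H hH (fun s => N s + η) (by fun_prop) (by
      rw [lintegral_add_right _ measurable_const, lintegral_const]
      exact ENNReal.add_ne_top.2 ⟨hNfin, ENNReal.mul_ne_top h1 (measure_ne_top _ _)⟩)
      (by simp [h0]) (fun s => (h4 s).trans (by gcongr; exact le_self_add))
    rw [lintegral_add_right _ measurable_const, lintegral_const] at h
    calc _ ≤ ((∫⁻ s, N s ∂ν + η * ν Set.univ)^4)^(1/4:ℝ) := by gcongr
      _ = _ := by rw [← ENNReal.rpow_natCast, ← ENNReal.rpow_mul]; norm_num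
  refine ENNReal.le_of_forall_pos_le_add fun ε hε _ => ?_
  have hne : (ε:ℝ≥0∞) ≠ 0 := by exact_mod_cast hε.ne'
  refine (key ((ε:ℝ≥0∞) / (ν Set.univ + 1)) ?_ ?_).trans ?_
  · refine (ENNReal.div_pos hne ?_).ne'
    exact ENNReal.add_ne_top.2 ⟨measure_ne_top _ _, by simp⟩
  · exact ENNReal.div_ne_top (by simp) (by simp)
  · gcongr
    rw [ENNReal.div_eq_inv_mul, mul_right_comm]
    calc _ ≤ ((ν Set.univ + 1)⁻¹ * (ν Set.univ + 1)) * (ε:ℝ≥0∞) := by gcongr; exact le_self_add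
      _ ≤ 1 * ε := by gcongr; exact ENNReal.inv_mul_le_one _
      _ = _ := one_mul _

lemma integral_diff (μ : Measure ℝ) (u v : ℝ → ℂ) (h : AEStronglyMeasurable (fun s => u s - v s) μ) :
    ‖∫ s, u s ∂μ - ∫ s, v s ∂μ‖ₑ ≤ ∫⁻ s, ‖u s - v s‖ₑ ∂μ := by
  by_cases htop : ∫⁻ s, ‖u s - v s‖ₑ ∂μ = ⊤
  · rw [htop]; exact le_top
  have hi : Integrable (fun s => u s - v s) μ := ⟨h, lt_top_iff_ne_top.2 htop⟩
  by_cases hu : Integrable u μ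
  · have hv : Integrable v μ := by
      refine (hu.sub hi).congr (Filter.Eventually.of_forall fun s => ?_)
      simp
    rw [← integral_sub hu hv]
    exact enorm_integral_le_lintegral_enorm _
  · have hv : ¬ Integrable v μ := by
      intro hv
      apply hu
      refine (hv.add hi).congr (Filter.Eventually.of_forall fun s => ?_)
      simp
    rw [integral_undef hu, integral_undef hv]
    simp

lemma dense_pairs : ∃ D : ℕ → {p : Ed 2 × Ed 2 // p.1 ≠ p.2}, DenseRange D := by
  have : Nonempty {p : Ed 2 × Ed 2 // p.1 ≠ p.2} := by
    obtain ⟨x, hx⟩ := exists_ne (0 : Ed 2)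
    exact ⟨⟨(x, 0), hx⟩⟩
  exact TopologicalSpace.exists_dense_seq _

lemma holder_dense (r : ℝ) (hr : 0 < r) (D : ℕ → {p : Ed 2 × Ed 2 // p.1 ≠ p.2}) (hD : DenseRange D)
    (v : Ed 2 → ℂ) (hv : Continuous v) (x y : Ed 2) :
    ‖v x - v y‖ₑ ≤ (⨆ n, ‖v (D n).1.1 - v (D n).1.2‖ₑ * ENNReal.ofReal (‖(D n).1.1 - (D n).1.2‖^(-r))) *
      ‖x - y‖ₑ^r := by
  by_cases hxy : x = y
  · simp [hxy]
  set S := (⨆ n, ‖v (D n).1.1 - v (D n).1.2‖ₑ * ENNReal.ofReal (‖(D n).1.1 - (D n).1.2‖^(-r)))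
  have hle : ∀ p : {p : Ed 2 × Ed 2 // p.1 ≠ p.2}, ENNReal.ofReal (‖v p.1.1 - v p.1.2‖ * ‖p.1.1 - p.1.2‖^(-r)) ≤ S := by
    intro p
    refine hD.induction_on (p := fun p => ENNReal.ofReal (‖v p.1.1 - v p.1.2‖ * ‖p.1.1 - p.1.2‖^(-r)) ≤ S) p ?_ ?_
    · refine isClosed_le ?_ continuous_const
      refine ENNReal.continuous_ofReal.comp ?_
      refine Continuous.mul (by fun_prop) ?_
      refine Continuous.rpow_const (by fun_prop) ?_
      intro p
      exact Or.inl (norm_ne_zero_iff.2 (sub_ne_zero.2 p.2))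
    · intro n
      rw [ENNReal.ofReal_mul (norm_nonneg _), ofReal_norm]
      exact le_iSup (fun n => ‖v (D n).1.1 - v (D n).1.2‖ₑ * ENNReal.ofReal (‖(D n).1.1 - (D n).1.2‖^(-r))) n
  have hpos : 0 < ‖x - y‖ := norm_pos_iff.2 (sub_ne_zero.2 hxy)
  calc ‖v x - v y‖ₑ = ENNReal.ofReal (‖v x - v y‖ * ‖x - y‖^(-r)) * ‖x - y‖ₑ^r := by
        rw [← ofReal_norm (x - y), ENNReal.ofReal_rpow_of_pos hpos, ← ENNReal.ofReal_mul (by positivity),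
          mul_assoc, ← Real.rpow_add hpos]
        simp
    _ ≤ _ := by
        gcongr
        exact hle ⟨(x,y), hxy⟩

lemma Uw_cont (a : Ed 2 → ℂ) (ha : Integrable a) (t : ℝ) : Continuous (fun x => Uw a t x) := by
  unfold Uw
  refine continuous_of_dominated (bound := fun κ => ‖a κ‖) (fun x => (Uw_int a ha t x).aestronglyMeasurable) ?_ ha.norm ?_
  · intro x
    refine Filter.Eventually.of_forall fun κ => ?_
    rw [norm_mul, Ew_norm, one_mul]
  · refine Filter.Eventually.of_forall fun κ => ?_
    refine Continuous.mul ?_ continuous_const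
    unfold Ew; fun_prop


open FourierTransform in
lemma ft_eq (g : SchwartzMap (Ed 2) ℂ) (κ : Ed 2) :
    ftransform 2 g κ = (𝓕 g) ((2*Real.pi)⁻¹ • κ) := by
  rw [SchwartzMap.fourier_coe, Real.fourier_eq']
  unfold ftransform
  congr 1; funext v
  rw [smul_eq_mul]
  congr 2
  rw [inner_smul_right]
  have := Real.pi_pos.ne'
  have h : -2 * Real.pi * ((2*Real.pi)⁻¹ * ⟪v, κ⟫) = -⟪v, κ⟫ := by field_simp
  rw [h]; push_cast; ring

lemma ft_int (g : SchwartzMap (Ed 2) ℂ) : Integrable (ftransform 2 g) := by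
  have : ftransform 2 g = fun κ => (FourierTransform.fourier g) ((2*Real.pi)⁻¹ • κ) := by
    funext κ; exact ft_eq g κ
  rw [this]
  exact (SchwartzMap.integrable (FourierTransform.fourier g)).comp_smul (by positivity)

lemma ft_meas_param (f : ℝ → SchwartzMap (Ed 2) ℂ) (hf : Continuous (fun q : ℝ × Ed 2 => f q.1 q.2)) :
    Measurable (fun p : ℝ × Ed 2 => ftransform 2 (f p.1) p.2) := by
  unfold ftransform
  have h1 : Measurable (fun q : (ℝ × Ed 2) × Ed 2 => f q.1.1 q.2) :=
    hf.measurable.comp (by fun_prop : Measurable (fun q : (ℝ × Ed 2) × Ed 2 => (q.1.1, q.2)))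
  have h2 : Measurable (fun q : (ℝ × Ed 2) × Ed 2 => ⟪q.2, q.1.2⟫) :=
    measurable_snd.inner (measurable_snd.comp measurable_fst)
  have : Measurable (fun q : (ℝ × Ed 2) × Ed 2 =>
      Complex.exp (-(Complex.I * (⟪q.2, q.1.2⟫ : ℂ))) * f q.1.1 q.2) := by
    fun_prop
  exact (this.stronglyMeasurable.integral_prod_right (ν := volume)).measurable

lemma ft_meas (g : SchwartzMap (Ed 2) ℂ) : Measurable (ftransform 2 g) := by
  have : ftransform 2 g = fun κ => (FourierTransform.fourier g) ((2*Real.pi)⁻¹ • κ) := by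
    funext κ; exact ft_eq g κ
  rw [this]
  exact ((SchwartzMap.continuous (FourierTransform.fourier g)).comp (continuous_const_smul _)).measurable

lemma Uw_meas_param {α : Type*} [MeasurableSpace α] (a : ℝ → Ed 2 → ℂ)
    (ha : Measurable (fun p : ℝ × Ed 2 => a p.1 p.2)) {s t : α → ℝ} (hs : Measurable s)
    (ht : Measurable t) (x : Ed 2) : Measurable (fun ω => Uw (a (s ω)) (t ω) x) := by
  unfold Uw
  have : Measurable (fun p : α × Ed 2 => Ew x (t p.1) p.2 * a (s p.1) p.2) :=
    (Ew_meas measurable_const (ht.comp measurable_fst) measurable_snd).mul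
      (ha.comp ((hs.comp measurable_fst).prodMk measurable_snd))
  exact (this.stronglyMeasurable.integral_prod_right (ν := volume)).measurable

/-- the constant (2π)^(-2) -/
noncomputable def c2 : ℝ := (2*Real.pi)^(-((2:ℕ):ℝ))

lemma c2_pos : 0 < c2 := by unfold c2; have := Real.pi_pos; positivity

lemma halfWave_eq (t : ℝ) (g : Ed 2 → ℂ) (x : Ed 2) :
    halfWave 2 t g x = (c2 : ℂ) * Uw (ftransform 2 g) t x := rfl

lemma sob_eq (θ : ℝ) (hθ : 0 < θ) (g : Ed 2 → ℂ) :
    sobolevSemi 2 θ g = (ENNReal.ofReal c2 * Sn θ (ftransform 2 g))^((1:ℝ)/2) := by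
  unfold sobolevSemi Sn c2
  congr 2
  congr 1; funext κ
  congr 1
  rw [← ENNReal.ofReal_rpow_of_nonneg (norm_nonneg _) (by positivity), ofReal_norm]
  rfl

/-- countable Hölder seminorm of the half wave -/
noncomputable def Hs (r : ℝ) (D : ℕ → {p : Ed 2 × Ed 2 // p.1 ≠ p.2}) (a : Ed 2 → ℂ) (t : ℝ) : ℝ≥0∞ :=
  ENNReal.ofReal c2 * ⨆ n, Qd r a t (D n).1.1 (D n).1.2

lemma Hs_meas (r : ℝ) (D : ℕ → {p : Ed 2 × Ed 2 // p.1 ≠ p.2}) {α : Type*} [MeasurableSpace α]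
    (a : ℝ → Ed 2 → ℂ)
    (ha : Measurable (fun p : ℝ × Ed 2 => a p.1 p.2)) {s t : α → ℝ} (hs : Measurable s)
    (ht : Measurable t) : Measurable (fun ω => Hs r D (a (s ω)) (t ω)) := by
  unfold Hs Qd
  have := fun x => Uw_meas_param a ha hs ht x
  refine Measurable.const_mul (Measurable.iSup fun n => ?_) _
  have h1 := this (D n).1.1
  have h2 := this (D n).1.2
  fun_prop

lemma Hs_bound (r : ℝ) (hr : 0 < r) (D : ℕ → {p : Ed 2 × Ed 2 // p.1 ≠ p.2}) (hD : DenseRange D)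
    (g : SchwartzMap (Ed 2) ℂ) (t : ℝ) (x y : Ed 2) :
    ‖halfWave 2 t g x - halfWave 2 t g y‖ₑ ≤ Hs r D (ftransform 2 g) t * ‖x - y‖ₑ^r := by
  have h := holder_dense r hr D hD _ (Uw_cont _ (ft_int g) t) x y
  rw [halfWave_eq, halfWave_eq, ← mul_sub, enorm_mul]
  have : ‖(c2:ℂ)‖ₑ = ENNReal.ofReal c2 := by
    rw [← ofReal_norm, Complex.norm_real, Real.norm_of_nonneg c2_pos.le]
  rw [this]
  unfold Hs Qd
  rw [mul_assoc]
  gcongr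

/-- Strichartz constant -/
noncomputable def C0 (r : ℝ) : ℝ≥0∞ := (ENNReal.ofReal c2 * ENNReal.ofReal (12 * cker r))^((1:ℝ)/2)

lemma C0_ne_top (r : ℝ) : C0 r ≠ ⊤ := by
  unfold C0
  exact ENNReal.rpow_ne_top_of_nonneg (by norm_num) (ENNReal.mul_ne_top ENNReal.ofReal_ne_top ENNReal.ofReal_ne_top)

lemma Hs_L4 (r : ℝ) (hr : 0 < r) (hr1 : r < 1) (D : ℕ → {p : Ed 2 × Ed 2 // p.1 ≠ p.2})
    (g : SchwartzMap (Ed 2) ℂ) :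
    ∫⁻ t, Hs r D (ftransform 2 g) t ^ 4 ≤ (C0 r * sobolevSemi 2 (r+3/4) g)^4 := by
  unfold Hs
  simp only [mul_pow]
  rw [lintegral_const_mul' _ _ (by simp)]
  have h := sup_est r hr hr1 (ftransform 2 g) (ft_meas g) (ft_int g) (fun n => (D n).1.1) (fun n => (D n).1.2) (fun n => (D n).2)
  have e : ∀ z : ℝ≥0∞, (z^((1:ℝ)/2))^4 = z^2 := by
    intro z
    rw [← ENNReal.rpow_natCast, ← ENNReal.rpow_natCast, ← ENNReal.rpow_mul]; norm_num
  rw [sob_eq _ (by linarith), C0, e, e]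
  calc _ ≤ ENNReal.ofReal c2^4 * (ENNReal.ofReal (12 * cker r)^2 * Sn (r+3/4) (ftransform 2 g) ^2) := by gcongr
    _ = _ := by ring


lemma main_glob (r : ℝ) (hr0 : 0 < r) (hr1 : r < 1) (T : ℝ) (hT : 0 < T)
    (w₀ : SchwartzMap (Ed 2) ℂ) (f : ℝ → SchwartzMap (Ed 2) ℂ)
    (hf : Continuous (fun q : ℝ × Ed 2 => f q.1 q.2))
    (hfin : (∫⁻ t in Set.Ioc (0 : ℝ) T, sobolevSemi 2 (r+3/4) ⇑(f t)) ≠ ⊤) :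
      (∫⁻ t in Set.Ioc (0 : ℝ) T,
          holderSemi 2 r
            (fun x => halfWave 2 t (⇑w₀) x +
              ∫ s in (0 : ℝ)..t, halfWave 2 (t - s) (⇑(f s)) x) ^ (4 : ℝ)) ^ ((1 : ℝ) / 4)
        ≤ C0 r *
            (sobolevSemi 2 (r+3/4) ⇑w₀ + ∫⁻ t in Set.Ioc (0 : ℝ) T, sobolevSemi 2 (r+3/4) ⇑(f t)) := by
  obtain ⟨D, hD⟩ := dense_pairs
  set a : ℝ → Ed 2 → ℂ := fun s => ftransform 2 (f s) with ha
  have ham : Measurable (fun p : ℝ × Ed 2 => a p.1 p.2) := ft_meas_param f hf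
  set H : ℝ → ℝ → ℝ≥0∞ := fun t s => Hs r D (a s) (t - s) with hH
  have hHm : Measurable (fun p : ℝ × ℝ => H p.1 p.2) :=
    Hs_meas r D a ham measurable_snd (measurable_fst.sub measurable_snd)
  set A : ℝ → ℝ≥0∞ := fun t => Hs r D (ftransform 2 w₀) t with hA
  have hAm : Measurable A := by
    have h0 : Measurable (fun p : ℝ × Ed 2 => ftransform 2 w₀ p.2) := (ft_meas w₀).comp measurable_snd
    exact Hs_meas r D (fun _ => ftransform 2 w₀) h0 (measurable_const (a := (0:ℝ))) measurable_id
  set ν : Measure ℝ := volume.restrict (Set.Ioc (0:ℝ) T) with hν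
  set e : ℝ → ℝ≥0∞ := fun t => ∫⁻ s, H t s ∂ν with he
  have hem : Measurable e := hHm.lintegral_prod_right'
  set N : ℝ → ℝ≥0∞ := fun s => sobolevSemi 2 (r+3/4) (f s) with hN
  have hNm : Measurable N := by
    have : N = fun s => (ENNReal.ofReal c2 * Sn (r+3/4) (a s))^((1:ℝ)/2) := by
      funext s; exact sob_eq _ (by linarith) _
    rw [this]
    refine Measurable.pow_const (Measurable.const_mul ?_ _) _
    unfold Sn
    have : Measurable (fun p : ℝ × Ed 2 => ENNReal.ofReal (‖p.2‖^(2*(r+3/4))) * ‖a p.1 p.2‖ₑ^2) := by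
      fun_prop
    exact this.lintegral_prod_right'
  have hpt : ∀ t ∈ Set.Ioc (0:ℝ) T, holderSemi 2 r
            (fun x => halfWave 2 t (⇑w₀) x +
              ∫ s in (0 : ℝ)..t, halfWave 2 (t - s) (⇑(f s)) x) ≤ A t + e t := by
    intro t ht
    unfold holderSemi
    refine iSup_le fun x => iSup_le fun y => ?_
    refine ENNReal.div_le_of_le_mul ?_
    change ‖(_ : ℂ)‖ₑ ≤ (A t + e t) * ‖x - y‖ₑ^r
    rw [add_sub_add_comm, add_mul]
    refine (enorm_add_le _ _).trans ?_
    refine add_le_add (Hs_bound r hr0 D hD w₀ t x y) ?_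
    rw [intervalIntegral.integral_of_le ht.1.le, intervalIntegral.integral_of_le ht.1.le]
    have hm : ∀ x, Measurable (fun s => halfWave 2 (t-s) (f s) x) := by
      intro x
      simp only [halfWave_eq]
      exact (Uw_meas_param a ham measurable_id (measurable_const.sub measurable_id) x).const_mul _
    refine (integral_diff _ _ _ ((hm x).sub (hm y)).aestronglyMeasurable).trans ?_
    calc _ ≤ ∫⁻ s in Set.Ioc 0 T, ‖halfWave 2 (t-s) (f s) x - halfWave 2 (t-s) (f s) y‖ₑ :=
          lintegral_mono_set (Set.Ioc_subset_Ioc_right ht.2)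
      _ ≤ ∫⁻ s in Set.Ioc 0 T, H t s * ‖x - y‖ₑ^r := lintegral_mono fun s => Hs_bound r hr0 D hD (f s) (t-s) x y
      _ = _ := by
        rw [lintegral_mul_const' _ _ (ENNReal.rpow_ne_top_of_nonneg hr0.le (by simp))]
  have r4 : ∀ z : ℝ≥0∞, z^(4:ℝ) = z^4 := fun z => by
    rw [← ENNReal.rpow_natCast]; norm_num
  have hA4 : (∫⁻ t, A t^(4:ℝ) ∂ν)^((1:ℝ)/4) ≤ C0 r * sobolevSemi 2 (r+3/4) w₀ := by
    have h := Hs_L4 r hr0 hr1 D w₀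
    calc _ ≤ ((C0 r * sobolevSemi 2 (r+3/4) w₀)^4)^((1:ℝ)/4) := by
          gcongr
          simp only [r4]
          exact (setLIntegral_le_lintegral _ _).trans h
      _ = _ := by rw [← ENNReal.rpow_natCast, ← ENNReal.rpow_mul]; norm_num
  have he4 : (∫⁻ t, e t^(4:ℝ) ∂ν)^((1:ℝ)/4) ≤ C0 r * ∫⁻ s, N s ∂ν := by
    simp only [r4]
    rw [← lintegral_const_mul _ hNm]
    refine mink ν ν H hHm (fun s => C0 r * N s) (hNm.const_mul _) ?_ ?_
    · rw [lintegral_const_mul _ hNm]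
      exact ENNReal.mul_ne_top (C0_ne_top r) hfin
    · intro s
      refine (setLIntegral_le_lintegral _ _).trans ?_
      have h := Hs_L4 r hr0 hr1 D (f s)
      refine le_trans (le_of_eq ?_) h
      exact lintegral_sub_right_eq_self (fun t => Hs r D (a s) t ^ 4) s
  calc _ ≤ (∫⁻ t, (A + e) t^(4:ℝ) ∂ν)^((1:ℝ)/4) := by
        gcongr ?_ ^ _
        refine setLIntegral_mono' measurableSet_Ioc fun t ht => ?_
        gcongr
        exact hpt t ht
    _ ≤ (∫⁻ t, A t^(4:ℝ) ∂ν)^((1:ℝ)/4) + (∫⁻ t, e t^(4:ℝ) ∂ν)^((1:ℝ)/4) :=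
        ENNReal.lintegral_Lp_add_le hAm.aemeasurable hem.aemeasurable (by norm_num)
    _ ≤ _ := by
        rw [mul_add]
        exact add_le_add hA4 he4

theorem stmt16 (r θ : ℝ) (hr0 : 0 < r) (hr1 : r < 1) (hθ : θ = r + 3 / 4) :
    ∃ C : ℝ, 0 < C ∧ ∀ (T : ℝ), 0 < T →
      ∀ (w₀ : SchwartzMap (Ed 2) ℂ) (f : ℝ → SchwartzMap (Ed 2) ℂ),
      ContinuousOn (fun q : ℝ × Ed 2 => f q.1 q.2) (Set.Icc 0 T ×ˢ Set.univ) →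
      (∫⁻ t in Set.Ioc (0 : ℝ) T, sobolevSemi 2 θ ⇑(f t)) ≠ ⊤ →
      (∫⁻ t in Set.Ioc (0 : ℝ) T,
          holderSemi 2 r
            (fun x => halfWave 2 t (⇑w₀) x +
              ∫ s in (0 : ℝ)..t, halfWave 2 (t - s) (⇑(f s)) x) ^ (4 : ℝ)) ^ ((1 : ℝ) / 4)
        ≤ ENNReal.ofReal C *
            (sobolevSemi 2 θ ⇑w₀ + ∫⁻ t in Set.Ioc (0 : ℝ) T, sobolevSemi 2 θ ⇑(f t)) := by
  subst hθ
  refine ⟨(C0 r).toReal + 1, by positivity, ?_⟩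
  intro T hT w₀ f hf hfin
  set f' : ℝ → SchwartzMap (Ed 2) ℂ := fun s => f (Set.projIcc 0 T hT.le s) with hf'
  have heq : ∀ s ∈ Set.Ioc (0:ℝ) T, f' s = f s := by
    intro s hs
    simp only [hf']
    rw [Set.projIcc_of_mem hT.le ⟨hs.1.le, hs.2⟩]
  have hfc : Continuous (fun q : ℝ × Ed 2 => f' q.1 q.2) := by
    have : Continuous (fun q : ℝ × Ed 2 => (((Set.projIcc 0 T hT.le q.1 : Set.Icc (0:ℝ) T) : ℝ), q.2)) := by
      have := (continuous_projIcc (h := hT.le)).comp (continuous_fst : Continuous (Prod.fst : ℝ × Ed 2 → ℝ))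
      exact (continuous_subtype_val.comp this).prodMk continuous_snd
    exact hf.comp_continuous this (fun q => ⟨(Set.projIcc 0 T hT.le q.1).2, Set.mem_univ _⟩)
  have hI : ∫⁻ t in Set.Ioc (0 : ℝ) T, sobolevSemi 2 (r+3/4) ⇑(f' t) =
      ∫⁻ t in Set.Ioc (0 : ℝ) T, sobolevSemi 2 (r+3/4) ⇑(f t) :=
    setLIntegral_congr_fun measurableSet_Ioc fun s hs => by simp only [heq s hs]
  have h := main_glob r hr0 hr1 T hT w₀ f' hfc (by rw [hI]; exact hfin)
  rw [hI] at h
  have hL : (∫⁻ t in Set.Ioc (0 : ℝ) T,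
          holderSemi 2 r
            (fun x => halfWave 2 t (⇑w₀) x +
              ∫ s in (0 : ℝ)..t, halfWave 2 (t - s) (⇑(f s)) x) ^ (4 : ℝ)) =
      ∫⁻ t in Set.Ioc (0 : ℝ) T,
          holderSemi 2 r
            (fun x => halfWave 2 t (⇑w₀) x +
              ∫ s in (0 : ℝ)..t, halfWave 2 (t - s) (⇑(f' s)) x) ^ (4 : ℝ) := by
    refine setLIntegral_congr_fun measurableSet_Ioc fun t ht => ?_
    congr 2
    funext x
    congr 1
    rw [intervalIntegral.integral_of_le ht.1.le, intervalIntegral.integral_of_le ht.1.le]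
    refine setIntegral_congr_fun measurableSet_Ioc fun s hs => ?_
    simp only [heq s ⟨hs.1, hs.2.trans ht.2⟩]
  rw [hL]
  refine h.trans ?_
  gcongr
  rw [ENNReal.ofReal_add ENNReal.toReal_nonneg (by norm_num), ENNReal.ofReal_toReal (C0_ne_top r)]
  exact le_self_add
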